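/- arXiv:2602.19646 — 2 statements merged into one kernel-verified Lean document; each statement's English description precedes it below -/
import Mathlib

section
/- Let F be a non-archimedean local field of odd residue characteristic with unramified additive character ψ, and let a, b ∈ F with v(a) ≤ min{0, v(b)}. Then for every integer m with m < −v(3), the integral of ψ(a t³ + b t) over the annulus 𝔭^m \ 𝔭^{m+1} vanishes: ∫_{t ∈ 𝔭^m \ 𝔭^{m+1}} ψ(a t³ + b t) dt = 0. -/
open MeasureTheory

/-!
Write `f t = ψ (a t³ + b t)`. If `h` is small then `f (h + t) = ψ ((3 a t² + b) h) f t`, and the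
factor in front of `f t` is itself invariant under small translations. Conditioning `f` on the sets
that are invariant under countably many small translations shows that its integral vanishes if, for
almost every `t`, the factor of one of these translations is nontrivial.

If the annulus consists of finitely many cosets of the smaller ball, one translation per coset is
enough, because the slope `3 a t² + b` has constant valuation and varies little on each coset. If it
consists of infinitely many, Poincaré recurrence finds in each set of positive measure three points
from distinct cosets. There the second divided difference of the slope is `3 a`, so suitable
multiples of the three slopes add up to an element on which `ψ` is nontrivial.

The σ-algebra need not be compatible with the translations, so the measure is first extended to
the Carathéodory measurable sets.
-/

namespace AiryVanishing

section Caratheodory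

variable {α : Type*}

/-- The outer measure `ρ` as a measure on the σ-algebra of all its Carathéodory measurable sets. -/
noncomputable def caratheodoryMeasure (ρ : OuterMeasure α) : @Measure α ρ.caratheodory :=
  @OuterMeasure.toMeasure α ρ.caratheodory ρ le_rfl

theorem measurePreserving_caratheodoryMeasure {ρ : OuterMeasure α} {e : Equiv.Perm α}
    (he : ∀ s, ρ (e ⁻¹' s) = ρ s) :
    @MeasurePreserving α α ρ.caratheodory ρ.caratheodory e
      (caratheodoryMeasure ρ) (caratheodoryMeasure ρ) := by
  let _ : MeasurableSpace α := ρ.caratheodory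
  have hmeas : Measurable e := by
    intro s hs
    refine ρ.isCaratheodory_iff.2 fun t ↦ ?_
    have h := ρ.isCaratheodory_iff.1 hs (e.symm ⁻¹' t)
    rwa [← he (e.symm ⁻¹' t), ← he (e.symm ⁻¹' t ∩ s), ← he (e.symm ⁻¹' t \ s),
      Set.preimage_inter, Set.preimage_sdiff, e.preimage_symm_preimage] at h
  refine ⟨hmeas, Measure.ext fun s hs ↦ ?_⟩
  rw [Measure.map_apply hmeas hs, caratheodoryMeasure, toMeasure_apply _ _ hs,
    toMeasure_apply _ _ (hmeas hs), he]

variable [m : MeasurableSpace α] (μ : Measure α)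

theorem caratheodoryMeasure_toOuterMeasure_apply (s : Set α) :
    caratheodoryMeasure μ.toOuterMeasure s = μ s := by
  refine le_antisymm ?_
    (@le_toMeasure_apply α μ.toOuterMeasure.caratheodory μ.toOuterMeasure le_rfl s)
  calc caratheodoryMeasure μ.toOuterMeasure s
      ≤ caratheodoryMeasure μ.toOuterMeasure (toMeasurable μ s) :=
        measure_mono (subset_toMeasurable μ s)
    _ = μ (toMeasurable μ s) :=
        @toMeasure_apply α μ.toOuterMeasure.caratheodory μ.toOuterMeasure le_rfl _
          (le_toOuterMeasure_caratheodory μ _ (measurableSet_toMeasurable μ s))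
    _ = μ s := measure_toMeasurable s

theorem trim_restrict_caratheodoryMeasure (s : Set α) :
    ((caratheodoryMeasure μ.toOuterMeasure).restrict s).trim (le_toOuterMeasure_caratheodory μ) =
      μ.restrict s := by
  refine @Measure.ext _ m _ _ fun t ht ↦ ?_
  rw [trim_measurableSet_eq _ ht, Measure.restrict_apply ht,
    @Measure.restrict_apply _ μ.toOuterMeasure.caratheodory _ _ _
      (le_toOuterMeasure_caratheodory μ _ ht), caratheodoryMeasure_toOuterMeasure_apply]

theorem setIntegral_caratheodoryMeasure {E : Type*} [NormedAddCommGroup E] [NormedSpace ℝ E]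
    {s : Set α} {f : α → E} (hf : AEStronglyMeasurable f (μ.restrict s)) :
    ∫ t in s, f t ∂caratheodoryMeasure μ.toOuterMeasure = ∫ t in s, f t ∂μ := by
  have htrim := trim_restrict_caratheodoryMeasure μ s
  rw [integral_trim_ae (le_toOuterMeasure_caratheodory μ) (htrim ▸ hf), htrim]

end Caratheodory

section Invariant

variable {X ι : Type*} [m : MeasurableSpace X]

/-- The σ-algebra of measurable sets that are invariant, up to `ν`-null sets, under all the
transformations `T i`. -/
@[reducible]
def aeInvariants (ν : Measure X) (T : ι → X → X) : MeasurableSpace X where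
  MeasurableSet' s := MeasurableSet s ∧ ∀ i, T i ⁻¹' s =ᵐ[ν] s
  measurableSet_empty := ⟨.empty, fun _ ↦ .rfl⟩
  measurableSet_compl s hs := ⟨hs.1.compl, fun i ↦ (hs.2 i).compl⟩
  measurableSet_iUnion s hs := ⟨.iUnion fun n ↦ (hs n).1, fun i ↦ by
    simpa only [Set.preimage_iUnion] using Filter.EventuallyEq.countable_iUnion fun n ↦ (hs n).2 i⟩

variable {ν : Measure X} {T : ι → X → X}

theorem aeInvariants_le : aeInvariants ν T ≤ m := fun _ hs ↦ hs.1

theorem aestronglyMeasurable_aeInvariants {β : Type*} [TopologicalSpace β]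
    [TopologicalSpace.PseudoMetrizableSpace β] [SecondCountableTopology β]
    (hT : ∀ i, MeasurePreserving (T i) ν ν) {χ : X → β}
    (hχ : AEStronglyMeasurable χ ν) (hχT : ∀ i, χ ∘ T i =ᵐ[ν] χ) :
    AEStronglyMeasurable[aeInvariants ν T] χ ν := by
  borelize β
  have hmk : Measurable[aeInvariants ν T] (hχ.mk χ) := fun B hB ↦
    ⟨hχ.stronglyMeasurable_mk.measurable hB, fun i ↦ by
      have h : hχ.mk χ ∘ T i =ᵐ[ν] hχ.mk χ :=
        ((hT i).quasiMeasurePreserving.ae_eq_comp hχ.ae_eq_mk.symm).trans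
          ((hχT i).trans hχ.ae_eq_mk)
      exact h.preimage B⟩
  exact ⟨hχ.mk χ, hmk.stronglyMeasurable, hχ.ae_eq_mk⟩

theorem condExp_aeInvariants_comp [IsFiniteMeasure ν] {E : Type*} [NormedAddCommGroup E]
    [NormedSpace ℝ E] [CompleteSpace E] (hT : ∀ i, MeasurePreserving (T i) ν ν) {f : X → E}
    (hf : Integrable f ν) (i : ι) :
    ν[f ∘ T i | aeInvariants ν T] =ᵐ[ν] ν[f | aeInvariants ν T] := by
  have hfT : Integrable (f ∘ T i) ν := (hT i).integrable_comp_of_integrable hf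
  refine (ae_eq_condExp_of_forall_setIntegral_eq aeInvariants_le hfT
    (fun _ _ _ ↦ integrable_condExp.integrableOn) (fun s hs _ ↦ ?_)
    stronglyMeasurable_condExp.aestronglyMeasurable).symm
  calc ∫ t in s, (ν[f | aeInvariants ν T]) t ∂ν = ∫ t in s, f t ∂ν :=
        setIntegral_condExp aeInvariants_le hf hs
    _ = ∫ t in T i ⁻¹' s, f (T i t) ∂ν := by
        rw [← setIntegral_map hs.1 ((hT i).map_eq.symm ▸ hf.1) (hT i).aemeasurable, (hT i).map_eq]
    _ = ∫ t in s, f (T i t) ∂ν := setIntegral_congr_set (hs.2 i)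

/-- Conditioning on the invariant sets turns the relation `f ∘ T i = χ i * f` into
`E[f] = χ i * E[f]`, so the conditional expectation vanishes wherever some `χ i` is not `1`. -/
theorem integral_eq_zero_of_comp_eq_mul {𝕜 : Type*} [RCLike 𝕜] [Countable ι]
    [IsFiniteMeasure ν] {χ : ι → X → 𝕜} {f : X → 𝕜}
    (hT : ∀ i, MeasurePreserving (T i) ν ν) (hχ : ∀ i, AEStronglyMeasurable (χ i) ν)
    (hf : Integrable f ν) (hfχ : ∀ i, f ∘ T i =ᵐ[ν] χ i * f)
    (hχT : ∀ i j, χ i ∘ T j =ᵐ[ν] χ i) (hne : ∀ᵐ t ∂ν, ∃ i, χ i t ≠ 1) :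
    ∫ t, f t ∂ν = 0 := by
  have heigen : ∀ i, ν[f | aeInvariants ν T] =ᵐ[ν] χ i * ν[f | aeInvariants ν T] := by
    intro i
    have hχf : Integrable (χ i * f) ν :=
      ((hT i).integrable_comp_of_integrable hf).congr (hfχ i)
    calc ν[f | aeInvariants ν T] =ᵐ[ν] ν[f ∘ T i | aeInvariants ν T] :=
          (condExp_aeInvariants_comp hT hf i).symm
      _ =ᵐ[ν] ν[χ i * f | aeInvariants ν T] := condExp_congr_ae (hfχ i)
      _ =ᵐ[ν] χ i * ν[f | aeInvariants ν T] :=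
          condExp_bilin_of_aestronglyMeasurable_left (.mul ℝ 𝕜)
            (aestronglyMeasurable_aeInvariants hT (hχ i) (hχT i)) hχf hf
  have hzero : ν[f | aeInvariants ν T] =ᵐ[ν] 0 := by
    filter_upwards [ae_all_iff.2 heigen, hne] with t ht ⟨i, hi⟩
    by_contra h0
    exact hi ((mul_eq_right₀ h0).1 (ht i).symm)
  rw [← integral_condExp aeInvariants_le, integral_congr_ae hzero]
  exact integral_zero X 𝕜

end Invariant

theorem ae_restrict_of_forall_measurableSet {α : Type*} [MeasurableSpace α] {μ : Measure α}
    {S : Set α} {p : α → Prop} (hp : NullMeasurableSet {t | p t} (μ.restrict S))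
    (h : ∀ M, MeasurableSet M → (∀ t ∈ M, ¬p t) → μ.restrict S M = 0) :
    ∀ᵐ t ∂μ.restrict S, p t := by
  obtain ⟨M, hMp, hM, hMae⟩ := hp.compl.exists_measurable_subset_ae_eq
  exact ae_iff.2 ((measure_congr hMae).symm.trans (h M hM hMp))

section Translation

variable {G : Type*} [AddCommGroup G] [MeasurableSpace G] [MeasurableAdd G] {μ : Measure G}
  [μ.IsAddLeftInvariant]

theorem measurePreserving_add_left_restrict {S : Set G} {h : G} (hS : ∀ t, h + t ∈ S ↔ t ∈ S) :
    MeasurePreserving (h + ·) (μ.restrict S) (μ.restrict S) := by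
  simpa only [show (h + ·) ⁻¹' S = S from Set.ext hS] using
    (measurePreserving_add_left μ h).restrict_preimage_emb (measurableEmbedding_addLeft h) S

theorem exists_mem_forall_add_mem {B : AddSubgroup G} (hB : μ (B : Set G) ≠ ⊤) {C : Set G}
    (hC : C.Infinite) (hCB : C ⊆ B) {M : Set G} (hM : MeasurableSet M)
    (hM0 : μ.restrict (B : Set G) M ≠ 0) (n : ℕ) :
    ∃ u : Finset G, u.card = n ∧ ↑u ⊆ C ∧ ∃ t ∈ B, ∀ c ∈ u, c + t ∈ M := by
  have : IsFiniteMeasure (μ.restrict (B : Set G)) := isFiniteMeasure_restrict.2 hB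
  have : Infinite C := hC.to_subtype
  have hpres : ∀ c : C, MeasurePreserving (c.1 + ·) (μ.restrict (B : Set G))
      (μ.restrict (B : Set G)) := fun c ↦
    measurePreserving_add_left_restrict fun _ ↦ B.add_mem_cancel_left (hCB c.2)
  have hmeas : ∀ c : C, MeasurableSet ((c.1 + ·) ⁻¹' M) := fun c ↦ measurable_const_add _ hM
  obtain ⟨W, hW, hWpos⟩ := bergelson hmeas hM0 fun c ↦
    ((hpres c).measure_preimage hM.nullMeasurableSet).ge
  obtain ⟨u, huW, hu⟩ := hW.exists_subset_card_eq n
  have hpos := hWpos huW u.finite_toSet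
  rw [Measure.restrict_apply (.biInter u.finite_toSet.countable fun c _ ↦ hmeas c)] at hpos
  obtain ⟨t, htM, htB⟩ := nonempty_of_measure_ne_zero hpos.ne'
  refine ⟨u.map (.subtype _), by simpa, ?_, t, htB, ?_⟩
  · simp
  · simpa using htM

end Translation

section AiryPhase

variable {F Γ₀ : Type*} [Field F] [LinearOrderedCommGroupWithZero Γ₀]

/-- The Airy function `t ↦ ψ (a t³ + b t)`. -/
def airy (ψ : AddChar F ℂ) (a b t : F) : ℂ := ψ (a * t ^ 3 + b * t)

/-- The derivative `3 a t² + b` of the phase of `airy ψ a b`. -/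
def airySlope (a b t : F) : F := 3 * a * t ^ 2 + b

/-- The conditions on radii `ρ < r` under which the phase `a t³ + b t` is, near any point of the
sphere `v t = r`, linear modulo the kernel of `ψ` at scale `ρ` with a nontrivial linear part. The
element `x` is one of smallest valuation at which `ψ` is nontrivial. -/
structure IsAiryPhase (v : Valuation F Γ₀) (ψ : AddChar F ℂ) (a b x : F) (r ρ : Γ₀) : Prop where
  char_ne_one : ψ x ≠ 1
  char_eq_one : ∀ y, v y < v x → ψ y = 1
  map_lt_lead : v b < v (3 * a) * r ^ 2
  scale_lt : ρ < r
  lead_mul_scale : v (3 * a) * r ^ 2 * ρ = v x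
  cubic_lt : v a * ρ ^ 3 < v x

theorem airySlope_sub_airySlope (a b s t : F) :
    airySlope a b s - airySlope a b t = 3 * a * ((s + t) * (s - t)) := by
  simp only [airySlope]
  ring

/-- The second divided difference of the slope, multiplied by `x / (3 a)`. -/
theorem airySlope_dividedDifference {a s t u : F} (b x : F) (ha : 3 * a ≠ 0) (hst : s ≠ t)
    (hsu : s ≠ u) (htu : t ≠ u) :
    airySlope a b s * (x / (3 * a * ((s - t) * (s - u)))) +
      airySlope a b t * (x / (3 * a * ((t - s) * (t - u)))) +
      airySlope a b u * (x / (3 * a * ((u - s) * (u - t)))) = x := by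
  obtain ⟨h3, ha⟩ := mul_ne_zero_iff.1 ha
  rw [← neg_sub s t, ← neg_sub s u, ← neg_sub t u]
  have hst' := sub_ne_zero.2 hst
  have hsu' := sub_ne_zero.2 hsu
  have htu' := sub_ne_zero.2 htu
  simp only [airySlope]
  field_simp
  ring

theorem airy_ne_zero (ψ : AddChar F ℂ) (a b t : F) : airy ψ a b t ≠ 0 := (ψ.val_isUnit _).ne_zero

namespace IsAiryPhase

variable {v : Valuation F Γ₀} {ψ : AddChar F ℂ} {a b x : F} {r ρ : Γ₀}

theorem radius_pos (hA : IsAiryPhase v ψ a b x r ρ) : 0 < r := zero_le.trans_lt hA.scale_lt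

theorem map_lead_pos (hA : IsAiryPhase v ψ a b x r ρ) : 0 < v (3 * a) :=
  pos_of_mul_pos_left (zero_le.trans_lt hA.map_lt_lead) zero_le

theorem map_pos (hA : IsAiryPhase v ψ a b x r ρ) : 0 < v x := by
  refine zero_lt_iff.2 ((v.ne_zero_iff).2 ?_)
  rintro rfl
  exact hA.char_ne_one ψ.map_zero_eq_one

theorem scale_pos (hA : IsAiryPhase v ψ a b x r ρ) : 0 < ρ :=
  pos_of_mul_pos_right (hA.lead_mul_scale ▸ hA.map_pos) zero_le

theorem char_add_of_lt (hA : IsAiryPhase v ψ a b x r ρ) {y z : F} (hy : v y < v x) :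
    ψ (z + y) = ψ z := by
  rw [AddChar.map_add_eq_mul, hA.char_eq_one y hy, mul_one]

theorem map_lead_mul_lt (hA : IsAiryPhase v ψ a b x r ρ) {s t h : F} (hs : v s ≤ r)
    (ht : v t < r) (hh : v h ≤ ρ) : v (3 * a * (s * t * h)) < v x := by
  have hlead := hA.map_lead_pos
  have hr := hA.radius_pos
  have hρ := hA.scale_pos
  calc v (3 * a * (s * t * h)) = v (3 * a) * (v s * v t * v h) := by simp only [map_mul]
    _ ≤ v (3 * a) * (r * v t * ρ) := by gcongr
    _ < v (3 * a) * (r * r * ρ) := by gcongr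
    _ = v x := by rw [← hA.lead_mul_scale, sq, ← mul_assoc]

theorem airy_add (hA : IsAiryPhase v ψ a b x r ρ) {t h : F} (ht : v t ≤ r) (hh : v h ≤ ρ) :
    airy ψ a b (h + t) = ψ (airySlope a b t * h) * airy ψ a b t := by
  have hcubic : v (a * h ^ 3) < v x :=
    calc v (a * h ^ 3) = v a * v h ^ 3 := by simp only [map_mul, map_pow]
      _ ≤ v a * ρ ^ 3 := by gcongr
      _ < v x := hA.cubic_lt
  have hquad := hA.map_lead_mul_lt ht (hh.trans_lt hA.scale_lt) hh
  have hexpand : a * (h + t) ^ 3 + b * (h + t) =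
      airySlope a b t * h + (a * t ^ 3 + b * t) + (3 * a * (t * h * h) + a * h ^ 3) := by
    simp only [airySlope]
    ring
  rw [airy, hexpand, hA.char_add_of_lt (v.map_add_lt hquad hcubic), AddChar.map_add_eq_mul, airy]

theorem char_airySlope_mul_congr (hA : IsAiryPhase v ψ a b x r ρ) {s t h : F} (hs : v s ≤ r)
    (ht : v t ≤ r) (hst : v (s - t) < r) (hh : v h ≤ ρ) :
    ψ (airySlope a b s * h) = ψ (airySlope a b t * h) := by
  have hsplit : airySlope a b s * h =
      airySlope a b t * h + 3 * a * ((s + t) * (s - t) * h) := by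
    linear_combination h * airySlope_sub_airySlope a b s t
  rw [hsplit, hA.char_add_of_lt (hA.map_lead_mul_lt (v.map_add_le hs ht) hst hh)]

theorem map_airySlope (hA : IsAiryPhase v ψ a b x r ρ) {t : F} (ht : v t = r) :
    v (airySlope a b t) = v (3 * a) * r ^ 2 := by
  have hlead : v (3 * a * t ^ 2) = v (3 * a) * r ^ 2 := by rw [map_mul, map_pow, ht]
  rw [airySlope, v.map_add_eq_of_lt_left (hlead ▸ hA.map_lt_lead), hlead]

theorem map_add_eq_radius_iff (hA : IsAiryPhase v ψ a b x r ρ) {t h : F} (hh : v h ≤ ρ) :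
    v (h + t) = r ↔ v t = r := by
  have hhr : v h < r := hh.trans_lt hA.scale_lt
  constructor <;> intro ht
  · rw [← add_sub_cancel_left h t, v.map_sub_eq_of_lt_left (ht ▸ hhr), ht]
  · rw [v.map_add_eq_of_lt_right (ht ▸ hhr), ht]

theorem map_div_lead_mul (hA : IsAiryPhase v ψ a b x r ρ) {s t : F} (hs : v s = r)
    (ht : v t = r) : v (x / (3 * a * (s * t))) = ρ := by
  have hlead : v (3 * a) * r ^ 2 ≠ 0 := (zero_le.trans_lt hA.map_lt_lead).ne'
  rw [map_div₀, v.map_mul, v.map_mul s, hs, ht, ← sq, ← hA.lead_mul_scale,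
    mul_div_cancel_left₀ _ hlead]

theorem char_airySlope_mul_ne_one (hA : IsAiryPhase v ψ a b x r ρ) {s t u : F} (hst : s ≠ t)
    (hsu : s ≠ u) (htu : t ≠ u) :
    ψ (airySlope a b s * (x / (3 * a * ((s - t) * (s - u))))) ≠ 1 ∨
      ψ (airySlope a b t * (x / (3 * a * ((t - s) * (t - u))))) ≠ 1 ∨
      ψ (airySlope a b u * (x / (3 * a * ((u - s) * (u - t))))) ≠ 1 := by
  by_contra! ⟨hs, ht, hu⟩
  refine hA.char_ne_one ?_
  rw [← airySlope_dividedDifference b x (v.ne_zero_iff.1 hA.map_lead_pos.ne') hst hsu htu,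
    AddChar.map_add_eq_mul, AddChar.map_add_eq_mul, hs, ht, hu, one_mul, one_mul]

variable [MeasurableSpace F] [MeasurableAdd F] {μ : Measure F} [μ.IsAddLeftInvariant]

theorem measurePreserving_add_left_sphere (hA : IsAiryPhase v ψ a b x r ρ) {h : F}
    (hh : v h ≤ ρ) :
    MeasurePreserving (h + ·) (μ.restrict {t | v t = r}) (μ.restrict {t | v t = r}) :=
  measurePreserving_add_left_restrict fun _ ↦ hA.map_add_eq_radius_iff hh

theorem setIntegral_airy_eq_zero_of_translates (hA : IsAiryPhase v ψ a b x r ρ)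
    (hμ : μ {t | v t ≤ r} ≠ ⊤) (hf : Integrable (airy ψ a b) (μ.restrict {t | v t = r}))
    {ι : Type*} [Countable ι] {H : ι → F} (hH : ∀ i, v (H i) ≤ ρ)
    (hM : ∀ M, MeasurableSet M → (∀ t ∈ M, v t ≤ r → ∀ i, ψ (airySlope a b t * H i) = 1) →
      μ.restrict {t | v t = r} M = 0) :
    ∫ t in {t | v t = r}, airy ψ a b t ∂μ = 0 := by
  have : IsFiniteMeasure (μ.restrict {t | v t = r}) :=
    isFiniteMeasure_restrict.2 (measure_ne_top_of_subset (fun _ ht ↦ ht.le) hμ)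
  have hT := fun i ↦ hA.measurePreserving_add_left_sphere (μ := μ) (hH i)
  set χ : ι → F → ℂ := fun i t ↦ airy ψ a b (H i + t) / airy ψ a b t
  have hχ : ∀ i t, v t ≤ r → χ i t = ψ (airySlope a b t * H i) := fun i t ht ↦ by
    rw [div_eq_iff (airy_ne_zero ψ a b t), hA.airy_add ht (hH i)]
  have hχm : ∀ i, AEStronglyMeasurable (χ i) (μ.restrict {t | v t = r}) := fun i ↦
    ((hf.1.comp_measurePreserving (hT i)).aemeasurable.div hf.1.aemeasurable).aestronglyMeasurable
  have hχT : ∀ i j, χ i ∘ (H j + ·) =ᵐ[μ.restrict {t | v t = r}] χ i := fun i j ↦ by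
    refine (ae_restrict_iff₀ (((hχm i).comp_measurePreserving (hT j)).nullMeasurableSet_eq_fun
      (hχm i))).2 (.of_forall fun t ht ↦ ?_)
    have hjt : v (H j + t) ≤ r := ((hA.map_add_eq_radius_iff (hH j)).2 ht).le
    rw [Function.comp_apply, hχ i _ hjt, hχ i t ht.le, hA.char_airySlope_mul_congr hjt ht.le
      (by simpa using (hH j).trans_lt hA.scale_lt) (hH i)]
  have hne : NullMeasurableSet {t | ∃ i, χ i t ≠ 1} (μ.restrict {t | v t = r}) := by
    simp only [Set.ofPred_exists]
    exact .iUnion fun i ↦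
      ((hχm i).nullMeasurableSet_eq_fun aestronglyMeasurable_const).compl
  refine integral_eq_zero_of_comp_eq_mul hT hχm hf
    (fun i ↦ .of_forall fun t ↦ (div_mul_cancel₀ _ (airy_ne_zero ψ a b t)).symm) hχT
    (ae_restrict_of_forall_measurableSet hne fun M hMm hMχ ↦ hM M hMm fun t ht htr i ↦ ?_)
  rw [← hχ i t htr]
  exact not_not.1 (not_exists.1 (hMχ t ht) i)

theorem setIntegral_airy_eq_zero_of_countable_cover (hA : IsAiryPhase v ψ a b x r ρ)
    (hμ : μ {t | v t ≤ r} ≠ ⊤) (hf : Integrable (airy ψ a b) (μ.restrict {t | v t = r}))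
    {C : Set F} (hC : C.Countable) (hCr : ∀ c ∈ C, v c = r)
    (hcover : ∀ t, v t = r → ∃ c ∈ C, v (t - c) < r) :
    ∫ t in {t | v t = r}, airy ψ a b t ∂μ = 0 := by
  have : Countable C := hC.to_subtype
  have hslope : ∀ c ∈ C, v (airySlope a b c) = v (3 * a) * r ^ 2 := fun c hc ↦
    hA.map_airySlope (hCr c hc)
  have hslope0 : 0 < v (3 * a) * r ^ 2 := zero_le.trans_lt hA.map_lt_lead
  have hH : ∀ c : C, v (x / airySlope a b c) ≤ ρ := fun c ↦ by
    rw [map_div₀, hslope c c.2, ← hA.lead_mul_scale, mul_div_cancel_left₀ _ hslope0.ne']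
  refine hA.setIntegral_airy_eq_zero_of_translates hμ hf hH fun M hM htriv ↦ ?_
  have hdisj : M ∩ {t | v t = r} = ∅ := by
    refine Set.eq_empty_of_forall_notMem fun t ⟨htM, htr⟩ ↦ ?_
    obtain ⟨c, hc, htc⟩ := hcover t htr
    have hc0 : airySlope a b c ≠ 0 := v.ne_zero_iff.1 ((hslope c hc).symm ▸ hslope0.ne')
    refine hA.char_ne_one ?_
    rw [← htriv t htM htr.le ⟨c, hc⟩,
      hA.char_airySlope_mul_congr htr.le (hCr c hc).le htc (hH ⟨c, hc⟩), mul_div_cancel₀ x hc0]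
  rw [Measure.restrict_apply hM, hdisj, measure_empty]

/-- The estimate for translations also holds inside the sphere, so it suffices to find three points
of the ball at mutual distance `r` in any non-null set. At these points the slope has the second
divided difference `3 a`, which is incompatible with a trivial character at all three. -/
theorem setIntegral_airy_eq_zero_of_infinite_separated (hA : IsAiryPhase v ψ a b x r ρ)
    (hμ : μ {t | v t ≤ r} ≠ ⊤) (hf : Integrable (airy ψ a b) (μ.restrict {t | v t = r}))
    {C : Set F} (hC : C.Infinite) (hCr : ∀ c ∈ C, v c ≤ r)
    (hsep : C.Pairwise fun c d ↦ v (c - d) = r) :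
    ∫ t in {t | v t = r}, airy ψ a b t ∂μ = 0 := by
  obtain ⟨D, hDC, hDcount, hDinf⟩ := hC.exists_subset_countable_infinite
  have : Countable D := hDcount.to_subtype
  have hdiff : ∀ {c d : F}, c ∈ D → d ∈ D → c ≠ d → v (c - d) = r := fun hc hd hcd ↦
    hsep (hDC hc) (hDC hd) hcd
  let H : D × D × D → F := fun p ↦ x / (3 * a * ((p.1 - p.2.1) * (p.1 - p.2.2)))
  have hH : ∀ p, v (H p) ≤ ρ := by
    rintro ⟨c, d, e⟩
    rcases eq_or_ne c d with rfl | hcd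
    · simp [H]
    rcases eq_or_ne c e with rfl | hce
    · simp [H]
    exact (hA.map_div_lead_mul (hdiff c.2 d.2 (Subtype.coe_ne_coe.2 hcd))
      (hdiff c.2 e.2 (Subtype.coe_ne_coe.2 hce))).le
  refine hA.setIntegral_airy_eq_zero_of_translates hμ hf hH fun M hM htriv ↦ ?_
  by_contra hM0
  have hsub : {t | v t = r} ⊆ (v.leAddSubgroup r : Set F) := fun t ht ↦ le_of_eq ht
  obtain ⟨u, hu, huD, t, ht, htM⟩ := exists_mem_forall_add_mem (B := v.leAddSubgroup r) hμ hDinf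
    (fun c hc ↦ hCr c (hDC hc)) hM
    (fun h ↦ hM0 (Measure.absolutelyContinuous_of_le (Measure.restrict_mono_set μ hsub) h)) 3
  have hval : ∀ c ∈ u, ∀ p, ψ (airySlope a b (c + t) * H p) = 1 := fun c hc ↦
    htriv _ (htM c hc) (v.map_add_le (hCr c (hDC (huD hc))) ht)
  obtain ⟨c, hc, d, hd, e, he, hcd, hce, hde⟩ := Finset.two_lt_card.1 (by lia : 2 < u.card)
  have hne := hA.char_airySlope_mul_ne_one (mt add_right_cancel hcd : c + t ≠ d + t)
    (mt add_right_cancel hce : c + t ≠ e + t) (mt add_right_cancel hde : d + t ≠ e + t)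
  simp only [add_sub_add_right_eq_sub] at hne
  rcases hne with hne | hne | hne
  · exact hne (hval c hc ⟨⟨c, huD hc⟩, ⟨d, huD hd⟩, ⟨e, huD he⟩⟩)
  · exact hne (hval d hd ⟨⟨d, huD hd⟩, ⟨c, huD hc⟩, ⟨e, huD he⟩⟩)
  · exact hne (hval e he ⟨⟨e, huD he⟩, ⟨c, huD hc⟩, ⟨d, huD hd⟩⟩)

theorem setIntegral_airy_eq_zero (hA : IsAiryPhase v ψ a b x r ρ) (hμ : μ {t | v t ≤ r} ≠ ⊤) :
    ∫ t in {t | v t = r}, airy ψ a b t ∂μ = 0 := by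
  by_cases hf : Integrable (airy ψ a b) (μ.restrict {t | v t = r})
  swap
  · exact integral_undef hf
  let P := v.ltAddSubgroup (Units.mk0 r hA.radius_pos.ne')
  obtain ⟨C, hCr, hC⟩ := {t | v t = r}.exists_subset_bijOn (QuotientAddGroup.mk : F → F ⧸ P)
  have hcongr : ∀ {s t : F}, (s : F ⧸ P) = t ↔ v (s - t) < r := fun {s t} ↦ by
    rw [QuotientAddGroup.eq_iff_sub_mem, Valuation.mem_ltAddSubgroup_iff, Units.val_mk0]
  rcases C.finite_or_infinite with hfin | hinf
  · refine hA.setIntegral_airy_eq_zero_of_countable_cover hμ hf hfin.countable hCr fun t ht ↦ ?_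
    obtain ⟨c, hc, hct⟩ := hC.surjOn ⟨t, ht, rfl⟩
    exact ⟨c, hc, hcongr.1 hct.symm⟩
  · refine hA.setIntegral_airy_eq_zero_of_infinite_separated hμ hf hinf (fun c hc ↦ (hCr hc).le)
      fun c hc d hd hcd ↦ ?_
    exact (v.map_sub_le (hCr hc).le (hCr hd).le).antisymm
      (not_lt.1 fun h ↦ hcd (hC.injOn hc hd (hcongr.2 h)))

end IsAiryPhase
end AiryPhase

section OuterInvariant

variable {F Γ₀ : Type*} [Field F] [LinearOrderedCommGroupWithZero Γ₀] {v : Valuation F Γ₀}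
  {ψ : AddChar F ℂ} {a b x : F} {r ρ : Γ₀}

theorem IsAiryPhase.setIntegral_airy_caratheodoryMeasure_eq_zero
    (hA : IsAiryPhase v ψ a b x r ρ) {κ : OuterMeasure F}
    (hκ : ∀ (c : F) (s : Set F), κ ((c + ·) ⁻¹' s) = κ s)
    (hfin : caratheodoryMeasure κ {t | v t ≤ r} ≠ ⊤) :
    ∫ t in {t | v t = r}, airy ψ a b t ∂caratheodoryMeasure κ = 0 := by
  have hpres := fun c : F ↦ measurePreserving_caratheodoryMeasure (e := Equiv.addLeft c) (hκ c)
  let _ : MeasurableSpace F := κ.caratheodory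
  have : MeasurableAdd F :=
    { measurable_const_add := fun c ↦ (hpres c).measurable
      measurable_add_const := fun c ↦ by
        simpa only [Equiv.coe_addLeft, add_comm c] using (hpres c).measurable }
  have : (caratheodoryMeasure κ).IsAddLeftInvariant := ⟨fun c ↦ (hpres c).map_eq⟩
  exact hA.setIntegral_airy_eq_zero hfin

/-- Translations need not be measurable here, but they are so for the Carathéodory σ-algebra. -/
theorem IsAiryPhase.setIntegral_airy_eq_zero_of_measure_preimage [MeasurableSpace F]
    {μ : Measure F} (hA : IsAiryPhase v ψ a b x r ρ)
    (hμ : ∀ (c : F) (s : Set F), μ ((c + ·) ⁻¹' s) = μ s) (hfin : μ {t | v t ≤ r} ≠ ⊤) :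
    ∫ t in {t | v t = r}, airy ψ a b t ∂μ = 0 := by
  by_cases hf : AEStronglyMeasurable (airy ψ a b) (μ.restrict {t | v t = r})
  swap
  · exact integral_non_aestronglyMeasurable hf
  rw [← caratheodoryMeasure_toOuterMeasure_apply] at hfin
  rw [← setIntegral_caratheodoryMeasure μ hf]
  exact hA.setIntegral_airy_caratheodoryMeasure_eq_zero hμ hfin

end OuterInvariant

section IntValuation

open scoped WithZero
open WithZero (exp)

variable {F : Type*} [Field F] {v : F → ℤ}

/-- The multiplicative valuation `x ↦ exp (-v x)` of an additive valuation `v` given by its values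
on nonzero elements; the value `v 0` is ignored. -/
noncomputable def intValuation (hv_mul : ∀ x y : F, x ≠ 0 → y ≠ 0 → v (x * y) = v x + v y)
    (hv_add : ∀ x y : F, x ≠ 0 → y ≠ 0 → x + y ≠ 0 → min (v x) (v y) ≤ v (x + y)) :
    Valuation F ℤᵐ⁰ := open scoped Classical in
  { toFun := fun x ↦ if x = 0 then 0 else exp (-v x)
    map_zero' := if_pos rfl
    map_one' := by
      have h1 : v 1 = v 1 + v 1 := by simpa only [mul_one] using hv_mul 1 1 one_ne_zero one_ne_zero
      rw [if_neg one_ne_zero, left_eq_add.1 h1, neg_zero, WithZero.exp_zero]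
    map_mul' := fun x y ↦ by
      rcases eq_or_ne x 0 with rfl | hx
      · simp
      rcases eq_or_ne y 0 with rfl | hy
      · simp
      rw [if_neg hx, if_neg hy, if_neg (mul_ne_zero hx hy), hv_mul x y hx hy, neg_add,
        WithZero.exp_add]
    map_add_le_max' := fun x y ↦ by
      rcases eq_or_ne x 0 with rfl | hx
      · rw [zero_add]
        exact le_max_right _ _
      rcases eq_or_ne y 0 with rfl | hy
      · rw [add_zero]
        exact le_max_left _ _
      rcases eq_or_ne (x + y) 0 with hxy | hxy
      · simp [hxy]
      rw [if_neg hx, if_neg hy, if_neg hxy, le_max_iff, WithZero.exp_le_exp, WithZero.exp_le_exp]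
      have := hv_add x y hx hy hxy
      lia }

variable {hv_mul : ∀ x y : F, x ≠ 0 → y ≠ 0 → v (x * y) = v x + v y}
  {hv_add : ∀ x y : F, x ≠ 0 → y ≠ 0 → x + y ≠ 0 → min (v x) (v y) ≤ v (x + y)} {x : F} {n : ℤ}

theorem intValuation_apply (hx : x ≠ 0) : intValuation hv_mul hv_add x = exp (-v x) := if_neg hx

theorem intValuation_le_exp_iff :
    intValuation hv_mul hv_add x ≤ exp (-n) ↔ x = 0 ∨ n ≤ v x := by
  rcases eq_or_ne x 0 with rfl | hx
  · simp
  · simp only [intValuation_apply hx, WithZero.exp_le_exp, neg_le_neg_iff, hx, false_or]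

theorem intValuation_eq_exp_iff :
    intValuation hv_mul hv_add x = exp (-n) ↔ x ≠ 0 ∧ v x = n := by
  rcases eq_or_ne x 0 with rfl | hx
  · simpa using WithZero.exp_ne_zero.symm
  · simp only [intValuation_apply hx, WithZero.exp_inj, neg_inj, ne_eq, hx, not_false_eq_true,
      true_and]

theorem isAiryPhase_intValuation {ψ : AddChar F ℂ} (h3 : (3 : F) ≠ 0)
    (hψ_triv : ∀ y, (y = 0 ∨ 0 ≤ v y) → ψ y = 1) (hx : x ≠ 0) (hvx : v x = -1) (hψx : ψ x ≠ 1)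
    {a b : F} (ha0 : a ≠ 0) (ha : v a ≤ 0) (hab : b = 0 ∨ v a ≤ v b) {m : ℤ} (hm : m < -v 3) :
    IsAiryPhase (intValuation hv_mul hv_add) ψ a b x (exp (-m))
      (exp (1 + v 3 + v a + 2 * m)) := by
  have hv3 : 0 ≤ v 3 := by
    have hone := (intValuation hv_mul hv_add).map_one.le
    have hle : intValuation hv_mul hv_add 3 ≤ exp (-0) := by
      rw [show (3 : F) = 1 + 1 + 1 by norm_num]
      exact Valuation.map_add_le _ (Valuation.map_add_le _ hone hone) hone
    exact (intValuation_le_exp_iff.1 hle).resolve_left h3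
  have hV3a : intValuation hv_mul hv_add (3 * a) = exp (-(v 3 + v a)) := by
    rw [intValuation_apply (mul_ne_zero h3 ha0), hv_mul 3 a h3 ha0]
  have hVx : intValuation hv_mul hv_add x = exp 1 := by rw [intValuation_apply hx, hvx, neg_neg]
  refine ⟨hψx, fun y hy ↦ hψ_triv y ?_, ?_, ?_, ?_, ?_⟩
  · refine intValuation_le_exp_iff (hv_mul := hv_mul) (hv_add := hv_add).1 ?_
    rwa [hVx, ← one_mul (exp 1), WithZero.lt_mul_exp_iff_le one_ne_zero] at hy
  · rw [hV3a, ← WithZero.exp_nsmul, ← WithZero.exp_add]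
    rcases hab with rfl | hab
    · rw [map_zero]
      exact WithZero.exp_pos
    refine (intValuation_le_exp_iff.2 (Or.inr hab)).trans_lt (WithZero.exp_lt_exp.2 ?_)
    rw [nsmul_eq_mul]
    lia
  · exact WithZero.exp_lt_exp.2 (by lia)
  · rw [hV3a, hVx, ← WithZero.exp_nsmul, ← WithZero.exp_add, ← WithZero.exp_add, WithZero.exp_inj,
      nsmul_eq_mul]
    lia
  · rw [intValuation_apply ha0, hVx, ← WithZero.exp_nsmul, ← WithZero.exp_add, WithZero.exp_lt_exp,
      nsmul_eq_mul]
    lia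

end IntValuation

end AiryVanishing

theorem stmt_5_general {F : Type*} [Field F] [MeasurableSpace F]
    (μ : Measure F) (v : F → ℤ) (ψ : F → ℂ) (h3 : (3 : F) ≠ 0)
    (hv_mul : ∀ x y : F, x ≠ 0 → y ≠ 0 → v (x * y) = v x + v y)
    (hv_add : ∀ x y : F, x ≠ 0 → y ≠ 0 → x + y ≠ 0 → min (v x) (v y) ≤ v (x + y))
    (m : ℤ) (hm : m < -(v 3)) (hμ : μ {x : F | x = 0 ∨ m ≤ v x} ≠ ⊤)
    (hμ_inv : ∀ (a : F) (s : Set F), μ ((a + ·) ⁻¹' s) = μ s)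
    (hψ_add : ∀ x y : F, ψ (x + y) = ψ x * ψ y)
    (hψ_triv : ∀ x : F, (x = 0 ∨ 0 ≤ v x) → ψ x = 1)
    (hψ_nontriv : ∃ x : F, x ≠ 0 ∧ v x = -1 ∧ ψ x ≠ 1)
    (a b : F) (ha0 : a ≠ 0) (ha : v a ≤ 0) (hab : b = 0 ∨ v a ≤ v b) :
    ∫ t in {t : F | t ≠ 0 ∧ v t = m}, ψ (a * t ^ 3 + b * t) ∂μ = 0 := by
  let χ : AddChar F ℂ := ⟨ψ, hψ_triv 0 (Or.inl rfl), hψ_add⟩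
  obtain ⟨x, hx, hvx, hψx⟩ := hψ_nontriv
  have hA := AiryVanishing.isAiryPhase_intValuation (ψ := χ) (hv_mul := hv_mul) (hv_add := hv_add)
    h3 hψ_triv hx hvx hψx ha0 ha hab hm
  simp only [← AiryVanishing.intValuation_le_exp_iff (hv_mul := hv_mul) (hv_add := hv_add)] at hμ
  simp only [← AiryVanishing.intValuation_eq_exp_iff (hv_mul := hv_mul) (hv_add := hv_add)]
  exact hA.setIntegral_airy_eq_zero_of_measure_preimage hμ_inv hμ

/-- The "airy_lemma": if `v(a) ≤ min{0, v(b)}`, then for every integer `m < -v(3)`, the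
integral of `ψ(a t³ + b t)` over the annulus `𝔭^m \ 𝔭^{m+1} = {t : v(t) = m}` vanishes. -/
theorem stmt_5 {F : Type*} [Field F] [CharZero F] [MeasurableSpace F]
    (μ : Measure F) (v : F → ℤ) (q : ℝ) (ψ : F → ℂ)
    (hq : 1 < q)
    (hv_mul : ∀ x y : F, x ≠ 0 → y ≠ 0 → v (x * y) = v x + v y)
    (hv_add : ∀ x y : F, x ≠ 0 → y ≠ 0 → x + y ≠ 0 → min (v x) (v y) ≤ v (x + y))
    (hodd : v 2 = 0)
    (hμ : ∀ n : ℤ, μ {x : F | x = 0 ∨ n ≤ v x} = ENNReal.ofReal (q ^ (-n)))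
    (hμ_inv : ∀ (a : F) (s : Set F), μ ((a + ·) ⁻¹' s) = μ s)
    (hψ_add : ∀ x y : F, ψ (x + y) = ψ x * ψ y)
    (hψ_triv : ∀ x : F, (x = 0 ∨ 0 ≤ v x) → ψ x = 1)
    (hψ_nontriv : ∃ x : F, x ≠ 0 ∧ v x = -1 ∧ ψ x ≠ 1)
    (a b : F) (ha0 : a ≠ 0) (ha : v a ≤ 0) (hab : b = 0 ∨ v a ≤ v b)
    (m : ℤ) (hm : m < -(v 3)) :
    ∫ t in {t : F | t ≠ 0 ∧ v t = m}, ψ (a * t ^ 3 + b * t) ∂μ = 0 := by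
  exact stmt_5_general μ v ψ three_ne_zero hv_mul hv_add m hm
    ((hμ m).trans_ne ENNReal.ofReal_ne_top) hμ_inv hψ_add hψ_triv hψ_nontriv a b ha0 ha hab
end

section
/- With Ai(a;b) := q^{−v(a)/3} ∫_{t∈O} ψ(a t³ + b t) dt and v(a) < 0: if v(a) ≤ v(b) < (1/3) v(a), then |Ai(a;b)| ≤ 2 q^{2 + v(3)} q^{−v(a)/12 + v(b)/4}. -/
open MeasureTheory

/-!
Stationary phase. On a coset `x + ball l` whose radius makes the quadratic and cubic terms of the
Taylor expansion of `a t³ + b t` integral, the integrand is a constant times the additive character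
`t ↦ ψ ((3 a x² + b) t)`, so the integral over the coset vanishes unless `3 a x² + b ∈ ball (-l)`.
Applied to the shells `v x = s` for small `s`, and then to a ball with `l = k ≈ -(v a + v b) / 4`,
this leaves only approximate roots of `3 a x² + b`. As `2` is a unit, these lie in two balls centred
at opposite points, or in a small ball around `0`, and their measure gives the bound.

The σ-algebra on `F` is arbitrary, so the balls need not be measurable. If the integrand is not
measurable, the integral is `0` by convention. Otherwise we pass to the Carathéodory σ-algebra of
the restriction of the outer measure to the valuation ring, which is invariant under translation.
The second differences of the phase then show that every `x ↦ ψ (6 a y x)` is measurable. The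
intersection of the kernels of these characters is `ball (-v (3 a))`. It has positive outer measure,
which bounds the index of every finite subintersection, so finitely many kernels suffice and the
ball is measurable of finite index. Finiteness of the index also forces `ψ` to have absolute value
`1` on the values of the phase.
-/

section Caratheodory

theorem isComplete_toMeasure {α : Type*} [MeasurableSpace α] {m : OuterMeasure α}
    (hm : ‹MeasurableSpace α› = m.caratheodory) : (m.toMeasure hm.le).IsComplete where
  out' s hs := by
    have h0 : m s = 0 := le_antisymm (hs ▸ le_toMeasure_apply m hm.le s) bot_le
    rw [hm]
    refine (OuterMeasure.isCaratheodory_iff_le' m).2 fun t => ?_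
    rw [measure_mono_null Set.inter_subset_right h0, zero_add]
    exact measure_mono Set.sdiff_subset

section Invariant

variable {G : Type*} [AddCommGroup G] [MeasurableSpace G] {m : OuterMeasure G}

theorem measurableAdd_of_eq_caratheodory (hm : ‹MeasurableSpace G› = m.caratheodory)
    (hinv : ∀ (y : G) (s : Set G), m ((y + ·) ⁻¹' s) = m s) : MeasurableAdd G := by
  have hadd (y : G) : Measurable (y + ·) := by
    intro s hs
    rw [hm] at hs ⊢
    intro t
    have hs' := hs ((-y + ·) ⁻¹' t)
    have hinter : (-y + ·) ⁻¹' t ∩ s = (-y + ·) ⁻¹' (t ∩ (y + ·) ⁻¹' s) := by ext; simp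
    have hsdiff : (-y + ·) ⁻¹' t \ s = (-y + ·) ⁻¹' (t \ (y + ·) ⁻¹' s) := by ext; simp
    rwa [hinter, hsdiff, hinv, hinv, hinv] at hs'
  exact ⟨hadd, fun y => by simpa only [add_comm] using hadd y⟩

theorem isAddLeftInvariant_toMeasure (hm : ‹MeasurableSpace G› = m.caratheodory)
    (hinv : ∀ (y : G) (s : Set G), m ((y + ·) ⁻¹' s) = m s) :
    (m.toMeasure hm.le).IsAddLeftInvariant where
  map_add_left_eq_self y := by
    have := measurableAdd_of_eq_caratheodory hm hinv
    ext s hs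
    rw [Measure.map_apply (measurable_const_add y) hs,
      toMeasure_apply _ _ (measurable_const_add y hs), toMeasure_apply _ _ hs, hinv]

end Invariant

theorem comap_coe_preimage_add {A : Type*} [AddGroup A] {m : OuterMeasure A}
    (hinv : ∀ (y : A) (s : Set A), m ((y + ·) ⁻¹' s) = m s) {H : AddSubgroup A} (y : H)
    (s : Set H) :
    OuterMeasure.comap ((↑) : H → A) m ((y + ·) ⁻¹' s) = OuterMeasure.comap (↑) m s := by
  rw [OuterMeasure.comap_apply, OuterMeasure.comap_apply, ← hinv y ((↑) '' s)]
  congr 1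
  ext x
  constructor
  · rintro ⟨z, hz, rfl⟩
    exact ⟨y + z, hz, rfl⟩
  · rintro ⟨z, hz, hzx⟩
    exact ⟨-y + z, by simpa using hz, by simp [hzx]⟩

section Comap

variable {α β : Type*} [MeasurableSpace α] [MeasurableSpace β] {μ : Measure α} {f : β → α}

theorem measurable_of_eq_caratheodory_comap
    (hm : ‹MeasurableSpace β› = (OuterMeasure.comap f μ.toOuterMeasure).caratheodory) :
    Measurable f := by
  intro A hA
  rw [hm]
  intro t
  simp only [OuterMeasure.comap_apply, Measure.coe_toOuterMeasure, Set.image_inter_preimage,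
    Set.image_sdiff_preimage]
  exact (measure_inter_add_sdiff _ hA).symm

theorem toMeasure_comap_apply
    (hm : ‹MeasurableSpace β› = (OuterMeasure.comap f μ.toOuterMeasure).caratheodory)
    (s : Set β) : (OuterMeasure.comap f μ.toOuterMeasure).toMeasure hm.le s = μ (f '' s) := by
  refine le_antisymm ?_ (le_toMeasure_apply _ hm.le s)
  obtain ⟨A, hsA, hA, hAμ⟩ := exists_measurable_superset μ (f '' s)
  calc (OuterMeasure.comap f μ.toOuterMeasure).toMeasure hm.le s
      ≤ (OuterMeasure.comap f μ.toOuterMeasure).toMeasure hm.le (f ⁻¹' A) :=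
        measure_mono (Set.image_subset_iff.1 hsA)
    _ = μ (f '' (f ⁻¹' A)) :=
        toMeasure_apply _ hm.le (measurable_of_eq_caratheodory_comap hm hA)
    _ ≤ μ A := measure_mono (Set.image_preimage_subset f A)
    _ = μ (f '' s) := hAμ

theorem map_toMeasure_comap
    (hm : ‹MeasurableSpace β› = (OuterMeasure.comap f μ.toOuterMeasure).caratheodory) :
    ((OuterMeasure.comap f μ.toOuterMeasure).toMeasure hm.le).map f =
      μ.restrict (Set.range f) := by
  ext A hA
  rw [Measure.map_apply (measurable_of_eq_caratheodory_comap hm) hA, toMeasure_comap_apply hm,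
    Measure.restrict_apply hA, Set.image_preimage_eq_inter_range]

theorem measurable_comp_of_aestronglyMeasurable_restrict_range
    (hm : ‹MeasurableSpace β› = (OuterMeasure.comap f μ.toOuterMeasure).caratheodory)
    {E : Type*} [TopologicalSpace E] [TopologicalSpace.PseudoMetrizableSpace E]
    [MeasurableSpace E] [BorelSpace E] {g : α → E}
    (hg : AEStronglyMeasurable g (μ.restrict (Set.range f))) : Measurable (g ∘ f) := by
  have := isComplete_toMeasure hm
  rw [← map_toMeasure_comap hm] at hg
  exact aemeasurable_iff_measurable.1
    (hg.comp_measurable (measurable_of_eq_caratheodory_comap hm)).aemeasurable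

theorem setIntegral_range_eq_integral_comp
    (hm : ‹MeasurableSpace β› = (OuterMeasure.comap f μ.toOuterMeasure).caratheodory)
    {E : Type*} [NormedAddCommGroup E] [NormedSpace ℝ E] {g : α → E}
    (hg : AEStronglyMeasurable g (μ.restrict (Set.range f))) :
    ∫ x in Set.range f, g x ∂μ =
      ∫ y, g (f y) ∂(OuterMeasure.comap f μ.toOuterMeasure).toMeasure hm.le := by
  rw [← map_toMeasure_comap hm] at hg ⊢
  exact integral_map (measurable_of_eq_caratheodory_comap hm).aemeasurable hg

end Comap

end Caratheodory

theorem preimage_mk_singleton {G : Type*} [AddGroup G] (K : AddSubgroup G) (x : G) :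
    (QuotientAddGroup.mk ⁻¹' {(x : G ⧸ K)} : Set G) = (-x + ·) ⁻¹' K := by
  ext z
  simp only [Set.mem_preimage, Set.mem_singleton_iff, SetLike.mem_coe]
  rw [eq_comm, QuotientAddGroup.eq]

section InvariantMeasure

variable {G : Type*} [AddGroup G] [MeasurableSpace G] [MeasurableAdd G] {K : AddSubgroup G}

theorem measurableSet_preimage_mk_singleton (hK : MeasurableSet (K : Set G)) (c : G ⧸ K) :
    MeasurableSet (QuotientAddGroup.mk ⁻¹' {c} : Set G) := by
  obtain ⟨x, rfl⟩ := QuotientAddGroup.mk_surjective c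
  rw [preimage_mk_singleton]
  exact measurable_const_add _ hK

theorem measurableSet_of_add_mem [K.FiniteIndex] (hK : MeasurableSet (K : Set G)) {T : Set G}
    (hT : ∀ x ∈ T, ∀ y ∈ K, x + y ∈ T) : MeasurableSet T := by
  have hcosets : T = ⋃ c ∈ (QuotientAddGroup.mk '' T : Set (G ⧸ K)),
      QuotientAddGroup.mk ⁻¹' {c} := by
    rw [← Set.preimage_iUnion₂, Set.biUnion_of_singleton]
    refine Set.Subset.antisymm (Set.subset_preimage_image _ T) ?_
    rintro z ⟨x, hx, hxz⟩
    simpa using hT x hx _ (QuotientAddGroup.eq.1 hxz)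
  rw [hcosets]
  exact (Set.toFinite _).measurableSet_biUnion fun c _ =>
    measurableSet_preimage_mk_singleton hK c

variable {P : Measure G} [P.IsAddLeftInvariant]

theorem finiteIndex_of_measure_ne_zero [IsFiniteMeasure P] (hK : MeasurableSet (K : Set G))
    (hPK : P K ≠ 0) : K.FiniteIndex := by
  have hcoset (c : G ⧸ K) : P (QuotientAddGroup.mk ⁻¹' {c}) = P K := by
    obtain ⟨x, rfl⟩ := QuotientAddGroup.mk_surjective c
    rw [preimage_mk_singleton, measure_preimage_add]
  have hfinite := Measure.finite_const_le_meas_of_disjoint_iUnion P (pos_iff_ne_zero.2 hPK)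
    (measurableSet_preimage_mk_singleton hK) (fun c d hcd => Disjoint.preimage _ (by simpa))
    (measure_ne_top P _)
  simp only [hcoset, le_refl, Set.ofPred_true, Set.finite_univ_iff] at hfinite
  exact AddSubgroup.finiteIndex_of_finite_quotient

theorem index_le_inv_measure [IsProbabilityMeasure P] (hK : MeasurableSet (K : Set G))
    (hPK : P K ≠ 0) : (K.index : ENNReal) ≤ (P K)⁻¹ := by
  have := finiteIndex_of_measure_ne_zero hK hPK
  rw [ENNReal.le_inv_iff_mul_le, K.index_mul_measure hK P, measure_univ]

theorem exists_finset_iInf_eq_iInf [IsProbabilityMeasure P] {ι : Type*}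
    {A : ι → AddSubgroup G} (hA : ∀ i, MeasurableSet (A i : Set G))
    (hPA : P (⨅ i, A i : AddSubgroup G) ≠ 0) : ∃ t : Finset ι, ⨅ i ∈ t, A i = ⨅ i, A i := by
  classical
  let B (t : Finset ι) : AddSubgroup G := ⨅ i ∈ t, A i
  have hAB (t : Finset ι) : ⨅ i, A i ≤ B t := le_iInf₂ fun i _ => iInf_le A i
  have hB (t : Finset ι) : MeasurableSet (B t : Set G) := by
    simp only [B, AddSubgroup.coe_iInf]
    exact t.measurableSet_biInter fun i _ => hA i
  have hPAB (t : Finset ι) : P (⨅ i, A i : AddSubgroup G) ≤ P (B t) := measure_mono (hAB t)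
  have hPB (t : Finset ι) : P (B t) ≠ 0 :=
    ((pos_iff_ne_zero.2 hPA).trans_le (hPAB t)).ne'
  obtain ⟨N, hN⟩ := ENNReal.exists_nat_gt (ENNReal.inv_ne_top.2 hPA)
  have hbdd : BddAbove (Set.range fun t => (B t).index) := by
    refine ⟨N, Set.forall_mem_range.2 fun t => ?_⟩
    exact_mod_cast (index_le_inv_measure (hB t) (hPB t)).trans
      ((ENNReal.inv_le_inv.2 (hPAB t)).trans hN.le)
  obtain ⟨t, ht⟩ := Nat.sSup_mem (Set.range_nonempty fun t => (B t).index) hbdd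
  refine ⟨t, le_antisymm (le_iInf fun i => ?_) (hAB t)⟩
  have hinsert : B (insert i t) ≤ B t := biInf_mono fun j hj => Finset.mem_insert_of_mem hj
  have hfin := finiteIndex_of_measure_ne_zero (hB (insert i t)) (hPB (insert i t))
  have heq : B (insert i t) = B t := by
    by_contra hne
    refine (AddSubgroup.index_strictAnti (hinsert.lt_of_ne hne)).not_ge ?_
    exact (le_csSup hbdd (Set.mem_range_self (insert i t))).trans_eq ht.symm
  exact heq.ge.trans (iInf₂_le i (Finset.mem_insert_self i t))

theorem measurableSet_iInf_of_measure_ne_zero [IsProbabilityMeasure P] {ι : Type*}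
    {A : ι → AddSubgroup G} (hA : ∀ i, MeasurableSet (A i : Set G))
    (hPA : P (⨅ i, A i : AddSubgroup G) ≠ 0) :
    MeasurableSet ((⨅ i, A i : AddSubgroup G) : Set G) := by
  obtain ⟨t, ht⟩ := exists_finset_iInf_eq_iInf hA hPA
  rw [← ht]
  simp only [AddSubgroup.coe_iInf]
  exact t.measurableSet_biInter fun i _ => hA i

theorem setIntegral_addChar_eq_zero {χ : AddChar G ℂ} {y : G} (hy : y ∈ K) (hne : χ y ≠ 1) :
    ∫ x in (K : Set G), χ x ∂P = 0 := by
  have hpre : (y + ·) ⁻¹' (K : Set G) = K := Set.ext fun x => K.add_mem_cancel_left hy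
  have hshift : χ y * ∫ x in (K : Set G), χ x ∂P = ∫ x in (K : Set G), χ x ∂P := by
    have := (measurePreserving_add_left P y).setIntegral_preimage_emb
      (measurableEmbedding_addLeft y) χ K
    simpa only [hpre, AddChar.map_add_eq_mul, integral_const_mul] using this
  exact (mul_left_eq_self₀.1 hshift).resolve_left hne

theorem setIntegral_eq_zero_of_coset_integral [K.FiniteIndex] (hK : MeasurableSet (K : Set G))
    {T : Set G} (hT : ∀ x ∈ T, ∀ y ∈ K, x + y ∈ T) {E : Type*} [NormedAddCommGroup E]
    [NormedSpace ℝ E] {f : G → E} (hf : IntegrableOn f T P)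
    (hzero : ∀ x ∈ T, ∫ y in (K : Set G), f (x + y) ∂P = 0) : ∫ x in T, f x ∂P = 0 := by
  let piece (c : G ⧸ K) : Set G := T ∩ QuotientAddGroup.mk ⁻¹' {c}
  have hpiece (c : G ⧸ K) : MeasurableSet (piece c) :=
    (measurableSet_of_add_mem hK hT).inter (measurableSet_preimage_mk_singleton hK c)
  have hdisj : Pairwise (Function.onFun Disjoint piece) := fun c d hcd =>
    (Disjoint.preimage _ (by simpa)).mono Set.inter_subset_right Set.inter_subset_right
  have hunion : ⋃ c, piece c = T := by
    rw [← Set.inter_iUnion, ← Set.preimage_iUnion, Set.iUnion_of_singleton, Set.preimage_univ,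
      Set.inter_univ]
  have hpiece_zero (c : G ⧸ K) : ∫ x in piece c, f x ∂P = 0 := by
    rcases (piece c).eq_empty_or_nonempty with hempty | ⟨x, hx, rfl⟩
    · rw [hempty, setIntegral_empty]
    have hcoset : piece (x : G ⧸ K) = (-x + ·) ⁻¹' K := by
      rw [← preimage_mk_singleton]
      refine Set.inter_eq_right.2 fun z hz => ?_
      simpa using hT x hx _ (QuotientAddGroup.eq.1 (Eq.symm hz))
    rw [hcoset, ← hzero x hx, ← (measurePreserving_add_left P (-x)).setIntegral_preimage_emb
      (measurableEmbedding_addLeft (-x)) (fun y => f (x + y))]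
    simp only [add_neg_cancel_left]
  rw [← hunion, integral_iUnion hpiece hdisj (hunion ▸ hf)]
  simp only [hpiece_zero, tsum_zero]

end InvariantMeasure

/-- `v` is a discrete valuation on the field `F`, written additively with values in `ℤ`. The
value `v 0` carries no meaning, so the axioms are only imposed away from `0`. -/
structure IsIntValuation {F : Type*} [Field F] (v : F → ℤ) : Prop where
  map_mul : ∀ x y : F, x ≠ 0 → y ≠ 0 → v (x * y) = v x + v y
  map_add : ∀ x y : F, x ≠ 0 → y ≠ 0 → x + y ≠ 0 → min (v x) (v y) ≤ v (x + y)

namespace IsIntValuation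

variable {F : Type*} [Field F] {v : F → ℤ}

theorem map_one (h : IsIntValuation v) : v 1 = 0 := by
  have := h.map_mul 1 1 one_ne_zero one_ne_zero
  rw [mul_one] at this
  omega

theorem map_neg (h : IsIntValuation v) (x : F) : v (-x) = v x := by
  rcases eq_or_ne x 0 with rfl | hx
  · rw [neg_zero]
  have hneg_one := h.map_mul (-1) (-1) (by simp) (by simp)
  have hneg_x := h.map_mul (-1) x (by simp) hx
  rw [neg_one_mul] at hneg_one hneg_x
  rw [neg_neg, h.map_one] at hneg_one
  omega

theorem map_inv (h : IsIntValuation v) {x : F} (hx : x ≠ 0) : v x⁻¹ = -v x := by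
  have := h.map_mul x x⁻¹ hx (inv_ne_zero hx)
  rw [mul_inv_cancel₀ hx, h.map_one] at this
  omega

variable (h : IsIntValuation v)

/-- The fractional ideal `{x | n ≤ v x}`, containing `0` whatever the value of `v 0`. -/
def ball (n : ℤ) : AddSubgroup F where
  carrier := {x | x = 0 ∨ n ≤ v x}
  zero_mem' := Or.inl rfl
  add_mem' := by
    rintro x y hx hy
    by_cases x0 : x = 0
    · simpa [x0] using hy
    by_cases y0 : y = 0
    · simpa [y0] using hx
    by_cases xy0 : x + y = 0
    · exact Or.inl xy0
    have := h.map_add x y x0 y0 xy0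
    exact Or.inr ((le_min (hx.resolve_left x0) (hy.resolve_left y0)).trans this)
  neg_mem' := by
    rintro x (rfl | hx)
    · exact Or.inl neg_zero
    · exact Or.inr (by rwa [h.map_neg])

theorem mem_ball {n : ℤ} {x : F} : x ∈ h.ball n ↔ x = 0 ∨ n ≤ v x := Iff.rfl

theorem mem_ball_iff {n : ℤ} {x : F} (hx : x ≠ 0) : x ∈ h.ball n ↔ n ≤ v x := by
  simp only [mem_ball, hx, false_or]

theorem self_mem_ball (x : F) : x ∈ h.ball (v x) := Or.inr le_rfl

theorem ball_anti {m n : ℤ} (hmn : m ≤ n) : h.ball n ≤ h.ball m := by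
  rintro x (rfl | hx)
  · exact Or.inl rfl
  · exact Or.inr (hmn.trans hx)

theorem mul_mem_ball_iff {c : F} (hc : c ≠ 0) {n : ℤ} {x : F} :
    c * x ∈ h.ball n ↔ x ∈ h.ball (n - v c) := by
  rcases eq_or_ne x 0 with rfl | hx
  · simp
  rw [h.mem_ball_iff (mul_ne_zero hc hx), h.mem_ball_iff hx, h.map_mul _ _ hc hx]
  omega

theorem mul_mem_ball {m n k : ℤ} {x y : F} (hx : x ∈ h.ball m) (hy : y ∈ h.ball n)
    (hk : k ≤ m + n) : x * y ∈ h.ball k := by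
  rcases eq_or_ne x 0 with rfl | x0
  · simp
  rw [h.mem_ball_iff x0] at hx
  exact (h.mul_mem_ball_iff x0).2 (h.ball_anti (by omega) hy)

theorem mul_sq_mem_ball_iff {c x : F} (hc : c ≠ 0) (hx : x ≠ 0) {n : ℤ} :
    c * x ^ 2 ∈ h.ball n ↔ n ≤ v c + 2 * v x := by
  rw [h.mul_mem_ball_iff hc, h.mem_ball_iff (pow_ne_zero 2 hx), pow_two, h.map_mul _ _ hx hx]
  omega

theorem one_mem_ball : (1 : F) ∈ h.ball 0 := Or.inr h.map_one.ge

theorem natCast_mem_ball (n : ℕ) : (n : F) ∈ h.ball 0 := by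
  simpa only [nsmul_one] using nsmul_mem h.one_mem_ball n

/-- The valuation ring of `v`, as an additive subgroup. -/
abbrev integers : AddSubgroup F := h.ball 0

/-- The fractional ideal `ball n` intersected with the valuation ring, as a subgroup of the
latter. It is the whole ring for `n ≤ 0`. -/
def intBall (n : ℤ) : AddSubgroup h.integers := (h.ball n).addSubgroupOf h.integers

theorem mem_intBall {n : ℤ} {x : h.integers} : x ∈ h.intBall n ↔ (x : F) ∈ h.ball n := Iff.rfl

theorem intBall_anti {m n : ℤ} (hmn : m ≤ n) : h.intBall n ≤ h.intBall m :=
  fun _ hx => h.ball_anti hmn hx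

theorem intBall_zero : h.intBall 0 = ⊤ := AddSubgroup.addSubgroupOf_self _

theorem image_coe_intBall (n : ℤ) :
    ((↑) : h.integers → F) '' h.intBall n = h.ball (max n 0) := by
  ext x
  constructor
  · rintro ⟨y, hy | hy, rfl⟩
    · exact Or.inl hy
    · exact y.2.imp_right (max_le hy)
  · exact fun hx =>
      ⟨⟨x, h.ball_anti (le_max_right n 0) hx⟩, h.ball_anti (le_max_left n 0) hx, rfl⟩

theorem finiteIndex_intBall_of_le {m n : ℤ} (hmn : m ≤ n) [(h.intBall n).FiniteIndex] :
    (h.intBall m).FiniteIndex :=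
  AddSubgroup.finiteIndex_of_le (h.intBall_anti hmn)

section Measurable

variable [MeasurableSpace h.integers] [MeasurableAdd h.integers]

theorem measurableSet_intBall_of_le {m n : ℤ} (hmn : m ≤ n) [(h.intBall n).FiniteIndex]
    (hn : MeasurableSet (h.intBall n : Set h.integers)) :
    MeasurableSet (h.intBall m : Set h.integers) :=
  measurableSet_of_add_mem hn fun _ hx _ hy => add_mem hx (h.intBall_anti hmn hy)

end Measurable

end IsIntValuation

/-- The conductor of the additive character `ψ` is exactly the valuation ring of `v`. -/
structure HasTrivialConductor {F : Type*} [Field F] {v : F → ℤ} (h : IsIntValuation v)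
    (ψ : AddChar F ℂ) : Prop where
  map_eq_one : ∀ x ∈ h.ball 0, ψ x = 1
  exists_ne_one : ∃ x : F, x ≠ 0 ∧ v x = -1 ∧ ψ x ≠ 1

/-- The additive character `x ↦ ψ (c * x)` of the valuation ring. -/
def mulChar {F : Type*} [Field F] {v : F → ℤ} (h : IsIntValuation v) (ψ : AddChar F ℂ) (c : F) :
    AddChar h.integers ℂ :=
  ψ.compAddMonoidHom ((AddMonoidHom.mulLeft c).comp h.integers.subtype)

theorem mem_ker_mulChar {F : Type*} [Field F] {v : F → ℤ} {h : IsIntValuation v}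
    {ψ : AddChar F ℂ} {c : F} {x : h.integers} :
    x ∈ (mulChar h ψ c).toAddMonoidHom.ker ↔ ψ (c * x) = 1 := Iff.rfl

namespace HasTrivialConductor

variable {F : Type*} [Field F] {v : F → ℤ} {h : IsIntValuation v} {ψ : AddChar F ℂ}

theorem exists_mul_ne_one (hψ : HasTrivialConductor h ψ) {c : F} {n : ℤ}
    (hc : c ∉ h.ball (-n)) : ∃ y ∈ h.ball n, ψ (c * y) ≠ 1 := by
  obtain ⟨x, hx0, hx, hne⟩ := hψ.exists_ne_one
  have hc0 : c ≠ 0 := fun h0 => hc (Or.inl h0)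
  rw [h.mem_ball_iff hc0] at hc
  refine ⟨c⁻¹ * x, ?_, by rwa [mul_inv_cancel_left₀ hc0]⟩
  rw [h.mul_mem_ball_iff (inv_ne_zero hc0), h.map_inv hc0, h.mem_ball_iff hx0]
  omega

theorem intBall_eq_iInf_ker_mulChar (hψ : HasTrivialConductor h ψ) {c : F} (hc : c ≠ 0) :
    h.intBall (-v c) = ⨅ y : h.integers, (mulChar h ψ (c * y)).toAddMonoidHom.ker := by
  ext x
  have hx : x ∈ h.intBall (-v c) ↔ c * x ∈ h.ball (-0) := by
    rw [h.mem_intBall, h.mul_mem_ball_iff hc, neg_zero, zero_sub]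
  simp only [AddSubgroup.mem_iInf, mem_ker_mulChar, mul_right_comm c _ (x : F), hx]
  constructor
  · exact fun hcx y => hψ.map_eq_one _ (h.mul_mem_ball hcx y.2 (by omega))
  · intro hker
    by_contra hcx
    obtain ⟨y, hy, hne⟩ := hψ.exists_mul_ne_one hcx
    exact hne (hker ⟨y, hy⟩)

theorem norm_eq_one_of_mem_ball (hψ : HasTrivialConductor h ψ) {c : F} (hc : c ≠ 0) {r : ℕ}
    (hr : (r : F) ≠ 0) [(h.intBall (-v (r * c))).FiniteIndex] {z : F} (hz : z ∈ h.ball (v c)) :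
    ‖ψ z‖ = 1 := by
  have hrc : (r : F) * c ≠ 0 := mul_ne_zero hr hc
  have hx : c⁻¹ * z ∈ h.ball 0 := by
    rwa [h.mul_mem_ball_iff (inv_ne_zero hc), h.map_inv hc, zero_sub, neg_neg]
  set N := (h.intBall (-v (r * c))).index
  have hmem : (r : F) * c * (N • (⟨c⁻¹ * z, hx⟩ : h.integers) : h.integers) ∈ h.ball 0 := by
    rw [h.mul_mem_ball_iff hrc, zero_sub]
    exact (h.intBall (-v (r * c))).nsmul_index_mem _
  have hrN : r * N ≠ 0 :=
    mul_ne_zero (fun h0 => hr (by rw [h0, Nat.cast_zero])) AddSubgroup.FiniteIndex.index_ne_zero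
  refine Complex.norm_eq_one_of_pow_eq_one ?_ hrN
  rw [← AddChar.map_nsmul_eq_pow]
  convert hψ.map_eq_one _ hmem using 2
  simp only [nsmul_eq_mul, Nat.cast_mul, AddSubgroup.coe_nsmul]
  field_simp

end HasTrivialConductor

/-- The integers `x` solving `c x² + b ≡ 0` modulo `ball n`. For the derivative `3 a x² + b` of
the phase these are the approximate critical points. -/
def approxRoots {F : Type*} [Field F] {v : F → ℤ} (h : IsIntValuation v) (c b : F) (n : ℤ) :
    Set h.integers :=
  {x | c * (x : F) ^ 2 + b ∈ h.ball n}

section ApproxRoots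

variable {F : Type*} [Field F] {v : F → ℤ} {h : IsIntValuation v} {c b : F} {n : ℤ}

theorem mem_approxRoots {x : h.integers} :
    x ∈ approxRoots h c b n ↔ c * (x : F) ^ 2 + b ∈ h.ball n := Iff.rfl

theorem add_mem_approxRoots_iff {s l : ℤ} (hsl : s ≤ l) (hn : n ≤ v c + s + l)
    {x y : h.integers} (hx : x ∈ h.intBall s) (hy : y ∈ h.intBall l) :
    x + y ∈ approxRoots h c b n ↔ x ∈ approxRoots h c b n := by
  have hexpand : c * ((x + y : h.integers) : F) ^ 2 + b =
      (c * (x : F) ^ 2 + b) + c * (((x : F) + (x + y)) * y) := by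
    rw [AddSubgroup.coe_add]
    ring
  have hincr : c * (((x : F) + (x + y)) * y) ∈ h.ball n :=
    h.mul_mem_ball (h.self_mem_ball _) (h.mul_mem_ball
      (add_mem hx (add_mem hx (h.intBall_anti hsl hy))) hy le_rfl) (by omega)
  rw [mem_approxRoots, mem_approxRoots, hexpand, AddSubgroup.add_mem_cancel_right _ hincr]

theorem mem_intBall_of_mem_approxRoots (hc : c ≠ 0) {s : ℤ} (hn : v c + 2 * s < n)
    (hb : v c + 2 * s < v b) {x : h.integers} (hx : x ∈ approxRoots h c b n) :
    x ∈ h.intBall (s + 1) := by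
  by_cases hx0 : (x : F) = 0
  · exact Or.inl hx0
  have hcx := sub_mem (h.ball_anti (min_le_left n (v b)) hx)
    (h.ball_anti (min_le_right n (v b)) (h.self_mem_ball b))
  rw [add_sub_cancel_right, h.mul_sq_mem_ball_iff hc hx0] at hcx
  rw [h.mem_intBall, h.mem_ball_iff hx0]
  omega

theorem ne_zero_and_map_le_of_mem_approxRoots (hc : c ≠ 0) (hb0 : b ≠ 0) (hb : v b < n)
    {x : h.integers} (hx : x ∈ approxRoots h c b n) :
    (x : F) ≠ 0 ∧ v c + 2 * v (x : F) ≤ v b := by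
  have hcx : c * (x : F) ^ 2 ∉ h.ball (v b + 1) := fun hmem => by
    have hbmem := sub_mem (h.ball_anti (show v b + 1 ≤ n by omega) hx) hmem
    rw [add_sub_cancel_left, h.mem_ball_iff hb0] at hbmem
    omega
  have hx0 : (x : F) ≠ 0 := fun h0 => hcx (by simp [h0])
  rw [h.mul_sq_mem_ball_iff hc hx0] at hcx
  exact ⟨hx0, by omega⟩

theorem approxRoots_subset_union (h2 : (2 : F) ≠ 0) (hv2 : v 2 = 0) (hc : c ≠ 0)
    {x₀ : h.integers} (hx₀0 : (x₀ : F) ≠ 0) (hx₀ : x₀ ∈ approxRoots h c b n) :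
    approxRoots h c b n ⊆ (-x₀ + ·) ⁻¹' h.intBall (n - v c - v (x₀ : F)) ∪
      (x₀ + ·) ⁻¹' h.intBall (n - v c - v (x₀ : F)) := by
  intro x hx
  have hprod : c * ((-x₀ + x) * (x₀ + x)) ∈ h.ball n := by
    have hfactor : c * ((-x₀ + x) * (x₀ + x)) = (c * (x : F) ^ 2 + b) - (c * (x₀ : F) ^ 2 + b) := by
      ring
    rw [hfactor]
    exact sub_mem hx hx₀
  by_cases hm : -(x₀ : F) + x = 0
  · exact Or.inl (Or.inl hm)
  by_cases hp : (x₀ : F) + x = 0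
  · exact Or.inr (Or.inl hp)
  rw [h.mul_mem_ball_iff hc, h.mem_ball_iff (mul_ne_zero hm hp), h.map_mul _ _ hm hp] at hprod
  -- The factors differ by `2 x₀` and `2` is a unit, so one of them is at least as large as `x₀`.
  have hmin : v (-(x₀ : F) + x) ≤ v (x₀ : F) ∨ v ((x₀ : F) + x) ≤ v (x₀ : F) := by
    by_contra! hlt
    have hmem : 2 * (x₀ : F) ∈ h.ball (v (x₀ : F) + 1) := by
      rw [show 2 * (x₀ : F) = (x₀ + x) - (-x₀ + x) by ring]
      exact sub_mem ((h.mem_ball_iff hp).2 hlt.2) ((h.mem_ball_iff hm).2 hlt.1)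
    rw [h.mul_mem_ball_iff h2, h.mem_ball_iff hx₀0] at hmem
    omega
  rcases hmin with hle | hle
  · exact Or.inr ((h.mem_ball_iff hp).2 (by omega))
  · exact Or.inl ((h.mem_ball_iff hm).2 (by omega))

theorem measureReal_approxRoots_le [MeasurableSpace h.integers] [MeasurableAdd h.integers]
    {P : Measure h.integers} [P.IsAddLeftInvariant] [IsFiniteMeasure P] {q : ℝ} (hq : 1 ≤ q)
    (hP : ∀ n : ℤ, P.real (h.intBall n) ≤ q ^ (-n)) (h2 : (2 : F) ≠ 0) (hv2 : v 2 = 0)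
    (hc : c ≠ 0) (hb0 : b ≠ 0) :
    P.real (approxRoots h c b n) ≤ 2 * q ^ (((v c : ℝ) + v b) / 2 - n) := by
  have hq0 : 0 < q := by linarith
  have hP_rpow (m : ℤ) (hm : 2 * n ≤ v c + v b + 2 * m) :
      P.real (h.intBall m) ≤ q ^ (((v c : ℝ) + v b) / 2 - n) := by
    have hm' : (2 * n : ℝ) ≤ v c + v b + 2 * m := by exact_mod_cast hm
    refine (hP m).trans ?_
    rw [← Real.rpow_intCast]
    exact Real.rpow_le_rpow_of_exponent_le hq (by push_cast; linarith)
  have hpos : 0 < q ^ (((v c : ℝ) + v b) / 2 - n) := Real.rpow_pos_of_pos hq0 _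
  rcases lt_or_ge (v b) n with hb | hb
  · rcases (approxRoots h c b n).eq_empty_or_nonempty with hempty | ⟨x₀, hx₀⟩
    · rw [hempty, measureReal_empty]
      positivity
    obtain ⟨hx₀0, hvx₀⟩ := ne_zero_and_map_le_of_mem_approxRoots hc hb0 hb hx₀
    have hball := hP_rpow (n - v c - v (x₀ : F)) (by omega)
    calc P.real (approxRoots h c b n)
        ≤ P.real ((-x₀ + ·) ⁻¹' h.intBall (n - v c - v (x₀ : F)) ∪
            (x₀ + ·) ⁻¹' h.intBall (n - v c - v (x₀ : F))) :=
          measureReal_mono (approxRoots_subset_union h2 hv2 hc hx₀0 hx₀)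
      _ ≤ P.real (h.intBall (n - v c - v (x₀ : F))) +
            P.real (h.intBall (n - v c - v (x₀ : F))) := by
          refine (measureReal_union_le _ _).trans_eq ?_
          simp only [measureReal_def, measure_preimage_add]
      _ ≤ 2 * q ^ (((v c : ℝ) + v b) / 2 - n) := by linarith
  · have hsub : approxRoots h c b n ⊆ h.intBall ((n - v c - 1) / 2 + 1) := fun x hx =>
      mem_intBall_of_mem_approxRoots hc (by omega) (by omega) hx
    have hball := hP_rpow ((n - v c - 1) / 2 + 1) (by omega)
    linarith [measureReal_mono (μ := P) hsub]

end ApproxRoots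

section CubicPhase

/-- The oscillating factor `ψ (a x³ + b x)` of the Airy integral. -/
def cubicPhase {F : Type*} [Field F] (ψ : AddChar F ℂ) (a b x : F) : ℂ := ψ (a * x ^ 3 + b * x)

variable {F : Type*} [Field F] {v : F → ℤ} {h : IsIntValuation v} {ψ : AddChar F ℂ} {a b : F}

theorem cubicPhase_add (hψ : HasTrivialConductor h ψ) {x y : F}
    (hquad : 3 * a * (x * (y * y)) ∈ h.ball 0) (hcub : a * (y * (y * y)) ∈ h.ball 0) :
    cubicPhase ψ a b (x + y) = cubicPhase ψ a b x * ψ ((3 * a * x ^ 2 + b) * y) := by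
  have htaylor : a * (x + y) ^ 3 + b * (x + y) =
      (a * x ^ 3 + b * x) + (3 * a * x ^ 2 + b) * y +
        (3 * a * (x * (y * y)) + a * (y * (y * y))) := by ring
  rw [cubicPhase, htaylor, AddChar.map_add_eq_mul, AddChar.map_add_eq_mul,
    hψ.map_eq_one _ (add_mem hquad hcub), mul_one, cubicPhase]

theorem norm_cubicPhase_eq_one (hψ : HasTrivialConductor h ψ) (h3 : (3 : F) ≠ 0) (ha0 : a ≠ 0)
    (hab : v a ≤ v b) [(h.intBall (-v (3 * a))).FiniteIndex] (x : h.integers) :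
    ‖cubicPhase ψ a b x‖ = 1 := by
  refine hψ.norm_eq_one_of_mem_ball ha0 (r := 3) h3 (add_mem ?_ ?_)
  · rw [pow_three]
    exact h.mul_mem_ball (h.self_mem_ball a)
      (h.mul_mem_ball x.2 (h.mul_mem_ball x.2 x.2 le_rfl) le_rfl) (by omega)
  · exact h.mul_mem_ball (h.self_mem_ball b) x.2 (by omega)

variable [MeasurableSpace h.integers] [MeasurableAdd h.integers]

theorem measurable_mul_of_measurable_cubicPhase
    (hg : Measurable fun x : h.integers => cubicPhase ψ a b x) (y : h.integers) :
    Measurable fun x : h.integers => ψ (6 * a * y * x) := by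
  let o : h.integers := ⟨1, h.one_mem_ball⟩
  have hshift (z : h.integers) : Measurable fun x : h.integers => cubicPhase ψ a b (x + z) :=
    hg.comp (measurable_add_const z)
  -- The second difference of `a x³ + b x` with steps `y` and `1` is `6 a y x` plus a constant.
  have hdiff : (fun x : h.integers => ψ (6 * a * y * x)) = fun x : h.integers =>
      cubicPhase ψ a b (x + (y + o : h.integers)) * cubicPhase ψ a b x *
        (cubicPhase ψ a b (x + y))⁻¹ * (cubicPhase ψ a b (x + o))⁻¹ *
        ψ (-(a * (3 * (y : F) ^ 2 + 3 * y))) := by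
    ext x
    simp only [cubicPhase, ← AddChar.map_neg_eq_inv, ← AddChar.map_add_eq_mul]
    congr 1
    simp only [o, AddSubgroup.coe_add]
    ring
  rw [hdiff]
  exact ((((hshift _).mul hg).mul (hshift _).inv).mul (hshift _).inv).mul_const _

variable {P : Measure h.integers} [P.IsAddLeftInvariant]

theorem measurableSet_intBall_of_measurable_cubicPhase [IsProbabilityMeasure P]
    (hψ : HasTrivialConductor h ψ) (h2 : (2 : F) ≠ 0) (hv2 : v 2 = 0) (h3a : 3 * a ≠ 0)
    (hP : P (h.intBall (-v (3 * a))) ≠ 0)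
    (hg : Measurable fun x : h.integers => cubicPhase ψ a b x) :
    MeasurableSet (h.intBall (-v (3 * a)) : Set h.integers) := by
  have h6a : 6 * a = 2 * (3 * a) := by ring
  have hv6a : v (3 * a) = v (6 * a) := by rw [h6a, h.map_mul _ _ h2 h3a, hv2, zero_add]
  rw [hv6a, hψ.intBall_eq_iInf_ker_mulChar (h6a ▸ mul_ne_zero h2 h3a)] at hP ⊢
  exact measurableSet_iInf_of_measure_ne_zero
    (fun y => measurable_mul_of_measurable_cubicPhase hg y (measurableSet_singleton 1)) hP

theorem setIntegral_cubicPhase_add_eq_zero (hψ : HasTrivialConductor h ψ) {s l : ℤ} (hl : 0 ≤ l)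
    (hlm : MeasurableSet (h.intBall l : Set h.integers))
    (hquad : 0 ≤ v (3 * a) + s + 2 * l) (hcub : 0 ≤ v a + 3 * l) {x : h.integers}
    (hx : x ∈ h.intBall s) (hderiv : x ∉ approxRoots h (3 * a) b (-l)) :
    ∫ y in (h.intBall l : Set h.integers), cubicPhase ψ a b (x + y : h.integers) ∂P = 0 := by
  have hlinear : Set.EqOn (fun y : h.integers => cubicPhase ψ a b (x + y : h.integers))
      (fun y => cubicPhase ψ a b x * mulChar h ψ (3 * a * (x : F) ^ 2 + b) y)
      (h.intBall l) := fun y hy => by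
    have hy2 := h.mul_mem_ball hy hy le_rfl
    exact cubicPhase_add hψ
      (h.mul_mem_ball (h.self_mem_ball _) (h.mul_mem_ball hx hy2 le_rfl) (by omega))
      (h.mul_mem_ball (h.self_mem_ball _) (h.mul_mem_ball hy hy2 le_rfl) (by omega))
  obtain ⟨y, hy, hne⟩ := hψ.exists_mul_ne_one hderiv
  have hy' : (⟨y, h.ball_anti hl hy⟩ : h.integers) ∈ h.intBall l := hy
  rw [setIntegral_congr_fun hlm hlinear, integral_const_mul,
    setIntegral_addChar_eq_zero hy' hne, mul_zero]

theorem setIntegral_cubicPhase_eq_zero (hψ : HasTrivialConductor h ψ) {s l : ℤ} (hl : 0 ≤ l)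
    [(h.intBall l).FiniteIndex] (hlm : MeasurableSet (h.intBall l : Set h.integers))
    (hquad : 0 ≤ v (3 * a) + s + 2 * l) (hcub : 0 ≤ v a + 3 * l) {T : Set h.integers}
    (hTs : T ⊆ h.intBall s) (hTl : ∀ x ∈ T, ∀ y ∈ h.intBall l, x + y ∈ T)
    (hderiv : Disjoint T (approxRoots h (3 * a) b (-l)))
    (hint : IntegrableOn (fun x : h.integers => cubicPhase ψ a b x) T P) :
    ∫ x in T, cubicPhase ψ a b x ∂P = 0 :=
  setIntegral_eq_zero_of_coset_integral hlm hTl hint fun _ hx =>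
    setIntegral_cubicPhase_add_eq_zero hψ hl hlm hquad hcub (hTs hx) (Set.disjoint_left.1 hderiv hx)

end CubicPhase

section StationaryPhase

variable {F : Type*} [Field F] {v : F → ℤ} {h : IsIntValuation v} {ψ : AddChar F ℂ} {a b : F}
  [MeasurableSpace h.integers] [MeasurableAdd h.integers] {P : Measure h.integers}
  [P.IsAddLeftInvariant] [(h.intBall (-v (3 * a))).FiniteIndex] {k : ℤ}

theorem setIntegral_shell_cubicPhase_eq_zero (hψ : HasTrivialConductor h ψ) (h3a : 3 * a ≠ 0)
    (hva : v a ≤ v (3 * a)) (hba : 3 * v b < v a) (hk : -v a - v b ≤ 4 * k)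
    (hm : MeasurableSet (h.intBall (-v (3 * a)) : Set h.integers)) {s : ℤ} (hs0 : 0 ≤ s)
    (hs : s < -v (3 * a) - 2 * k)
    (hint : Integrable (fun x : h.integers => cubicPhase ψ a b x) P) :
    ∫ x in (h.intBall s : Set h.integers) \ h.intBall (s + 1), cubicPhase ψ a b x ∂P = 0 := by
  obtain ⟨l, hl, hl'⟩ : ∃ l : ℤ, -v (3 * a) - s ≤ 2 * l ∧ 2 * l ≤ -v (3 * a) - s + 1 :=
    ⟨(-v (3 * a) - s + 1) / 2, by omega, by omega⟩
  have hlm : l ≤ -v (3 * a) := by omega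
  have := h.finiteIndex_intBall_of_le hlm
  refine setIntegral_cubicPhase_eq_zero hψ (by omega) (h.measurableSet_intBall_of_le hlm hm)
    (s := s) (by omega) (by omega) Set.sdiff_subset ?_ ?_ hint.integrableOn
  · rintro x ⟨hx, hx'⟩ y hy
    have hy' : y ∈ h.intBall (s + 1) := h.intBall_anti (by omega) hy
    exact ⟨add_mem hx (h.intBall_anti (by omega) hy'),
      fun hxy => hx' ((AddSubgroup.add_mem_cancel_right _ hy').1 hxy)⟩
  · exact Set.disjoint_left.2 fun _ hx hroot =>
      hx.2 (mem_intBall_of_mem_approxRoots h3a (by omega) (by omega) hroot)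

theorem integral_cubicPhase_eq_setIntegral_intBall (hψ : HasTrivialConductor h ψ)
    (h3a : 3 * a ≠ 0) (hva : v a ≤ v (3 * a)) (hba : 3 * v b < v a) (hk : -v a - v b ≤ 4 * k)
    (hm : MeasurableSet (h.intBall (-v (3 * a)) : Set h.integers))
    (hint : Integrable (fun x : h.integers => cubicPhase ψ a b x) P) {n : ℕ}
    (hn : n ≤ (-v (3 * a) - 2 * k).toNat) :
    ∫ x : h.integers, cubicPhase ψ a b x ∂P =
      ∫ x in (h.intBall n : Set h.integers), cubicPhase ψ a b x ∂P := by
  induction n with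
  | zero => rw [Nat.cast_zero, h.intBall_zero, AddSubgroup.coe_top, setIntegral_univ]
  | succ n ih =>
    have := h.finiteIndex_intBall_of_le (show (n : ℤ) + 1 ≤ -v (3 * a) by omega)
    have hmn := h.measurableSet_intBall_of_le (show (n : ℤ) + 1 ≤ -v (3 * a) by omega) hm
    have hanti : h.intBall (n + 1) ≤ h.intBall n := h.intBall_anti (by omega)
    rw [Nat.cast_succ, ih (by omega), ← integral_inter_add_sdiff hmn hint.integrableOn,
      setIntegral_shell_cubicPhase_eq_zero hψ h3a hva hba hk hm (by omega) (by omega) hint,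
      add_zero, Set.inter_eq_right.2 hanti]

theorem norm_integral_cubicPhase_le_measureReal_approxRoots [IsFiniteMeasure P]
    (hψ : HasTrivialConductor h ψ) (h3a : 3 * a ≠ 0) (hva : v a ≤ v (3 * a))
    (hba : 3 * v b < v a) (hk : -v a - v b ≤ 4 * k) (hkm : k ≤ -v (3 * a))
    (hm : MeasurableSet (h.intBall (-v (3 * a)) : Set h.integers))
    (hint : Integrable (fun x : h.integers => cubicPhase ψ a b x) P)
    (hnorm : ∀ x : h.integers, ‖cubicPhase ψ a b x‖ ≤ 1) :
    ‖∫ x : h.integers, cubicPhase ψ a b x ∂P‖ ≤ P.real (approxRoots h (3 * a) b (-k)) := by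
  set r : ℕ := (-v (3 * a) - 2 * k).toNat
  set S := approxRoots h (3 * a) b (-k)
  have hrk : (r : ℤ) ≤ k := by omega
  have hroots {x y : h.integers} (hx : x ∈ h.intBall r) (hy : y ∈ h.intBall k) :
      x + y ∈ S ↔ x ∈ S := add_mem_approxRoots_iff hrk (by omega) hx hy
  have := h.finiteIndex_intBall_of_le hkm
  have hmk := h.measurableSet_intBall_of_le hkm hm
  have hmS : MeasurableSet ((h.intBall r : Set h.integers) ∩ S) :=
    measurableSet_of_add_mem hmk fun _ hx _ hy =>
      ⟨add_mem hx.1 (h.intBall_anti hrk hy), (hroots hx.1 hy).2 hx.2⟩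
  have hrest : ∫ x in (h.intBall r : Set h.integers) \ S, cubicPhase ψ a b x ∂P = 0 :=
    setIntegral_cubicPhase_eq_zero hψ (by omega) hmk (s := r) (by omega) (by omega)
      Set.sdiff_subset (fun x hx y hy =>
        ⟨add_mem hx.1 (h.intBall_anti hrk hy), fun hxy => hx.2 ((hroots hx.1 hy).1 hxy)⟩)
      Set.disjoint_sdiff_left hint.integrableOn
  calc ‖∫ x : h.integers, cubicPhase ψ a b x ∂P‖
      = ‖∫ x in (h.intBall r : Set h.integers) ∩ S, cubicPhase ψ a b x ∂P‖ := by
        rw [integral_cubicPhase_eq_setIntegral_intBall hψ h3a hva hba hk hm hint le_rfl,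
          ← integral_inter_add_sdiff hmS hint.integrableOn, ← Set.inter_assoc, Set.inter_self,
          Set.sdiff_self_inter, hrest, add_zero]
    _ ≤ 1 * P.real ((h.intBall r : Set h.integers) ∩ S) :=
        norm_setIntegral_le_of_norm_le_const (measure_lt_top _ _) fun x _ => hnorm x
    _ ≤ P.real S := (one_mul _).trans_le (measureReal_mono Set.inter_subset_right)

end StationaryPhase

section Bound

variable {F : Type*} [Field F] {v : F → ℤ} {h : IsIntValuation v} {ψ : AddChar F ℂ} {a b : F}

section Normalized

variable [MeasurableSpace h.integers] {P : Measure h.integers} {q : ℝ}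

theorem isProbabilityMeasure_of_measure_intBall
    (hP : ∀ n : ℤ, P (h.intBall n) = ENNReal.ofReal (q ^ (-max n 0))) : IsProbabilityMeasure P :=
  ⟨by simpa only [h.intBall_zero, AddSubgroup.coe_top, max_self, neg_zero, zpow_zero,
    ENNReal.ofReal_one] using hP 0⟩

theorem measureReal_intBall_le (hq : 1 ≤ q)
    (hP : ∀ n : ℤ, P (h.intBall n) = ENNReal.ofReal (q ^ (-max n 0))) (n : ℤ) :
    P.real (h.intBall n) ≤ q ^ (-n) := by
  rw [measureReal_def, hP, ENNReal.toReal_ofReal (by positivity)]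
  exact zpow_le_zpow_right₀ hq (neg_le_neg (le_max_left n 0))

end Normalized

theorem norm_integral_cubicPhase_le [MeasurableSpace h.integers] [MeasurableAdd h.integers]
    {P : Measure h.integers} [P.IsAddLeftInvariant] {q : ℝ} (hq : 1 ≤ q)
    (hP : ∀ n : ℤ, P (h.intBall n) = ENNReal.ofReal (q ^ (-max n 0)))
    (hψ : HasTrivialConductor h ψ) (h2 : (2 : F) ≠ 0) (hv2 : v 2 = 0) (h3 : (3 : F) ≠ 0)
    (ha0 : a ≠ 0) (hb0 : b ≠ 0) (hab : v a ≤ v b) (hba : 3 * v b < v a)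
    (hg : Measurable fun x : h.integers => cubicPhase ψ a b x) :
    ‖∫ x : h.integers, cubicPhase ψ a b x ∂P‖ ≤ 2 * q ^ (2 + (v 3 : ℝ) + (v a + v b) / 4) := by
  have hq0 : 0 < q := by linarith
  have hprob := isProbabilityMeasure_of_measure_intBall hP
  have hP0 : P (h.intBall (-v (3 * a))) ≠ 0 := by
    rw [hP]
    exact (ENNReal.ofReal_pos.2 (zpow_pos hq0 _)).ne'
  have h3a : 3 * a ≠ 0 := mul_ne_zero h3 ha0
  have hv3a : v (3 * a) = v 3 + v a := h.map_mul _ _ h3 ha0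
  have hv3 : 0 ≤ v 3 := (h.mem_ball_iff h3).1 (h.natCast_mem_ball 3)
  have hm := measurableSet_intBall_of_measurable_cubicPhase hψ h2 hv2 h3a hP0 hg
  have hfin := finiteIndex_of_measure_ne_zero hm hP0
  have hnorm (x : h.integers) : ‖cubicPhase ψ a b x‖ ≤ 1 :=
    (norm_cubicPhase_eq_one hψ h3 ha0 hab x).le
  have hint : Integrable (fun x : h.integers => cubicPhase ψ a b x) P :=
    Integrable.of_bound hg.aestronglyMeasurable 1 (.of_forall hnorm)
  obtain ⟨k, hk, hk'⟩ : ∃ k : ℤ, -v a - v b ≤ 4 * k ∧ 4 * k ≤ -v a - v b + 3 :=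
    ⟨(-v a - v b + 3) / 4, by omega, by omega⟩
  have hk'R : (4 * k : ℝ) ≤ -v a - v b + 3 := by exact_mod_cast hk'
  have hv3R : (0 : ℝ) ≤ v 3 := by exact_mod_cast hv3
  by_cases hkm : k ≤ -v (3 * a)
  · calc ‖∫ x : h.integers, cubicPhase ψ a b x ∂P‖
        ≤ P.real (approxRoots h (3 * a) b (-k)) :=
          norm_integral_cubicPhase_le_measureReal_approxRoots hψ h3a (by omega) hba hk hkm hm hint
            hnorm
      _ ≤ 2 * q ^ (((v (3 * a) : ℝ) + v b) / 2 - (-k : ℤ)) :=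
          measureReal_approxRoots_le hq (measureReal_intBall_le hq hP) h2 hv2 h3a hb0
      _ ≤ 2 * q ^ (2 + (v 3 : ℝ) + (v a + v b) / 4) := by
          gcongr
          rw [hv3a]
          push_cast
          linarith
  · have htrivial : ‖∫ x : h.integers, cubicPhase ψ a b x ∂P‖ ≤ 1 := by
      simpa using norm_integral_le_of_norm_le_const (μ := P) (.of_forall hnorm)
    have hexp : (0 : ℝ) ≤ 8 + 4 * v 3 + v a + v b := by
      exact_mod_cast (show 0 ≤ 8 + 4 * v 3 + v a + v b by omega)
    have := Real.one_le_rpow hq (z := 2 + (v 3 : ℝ) + (v a + v b) / 4) (by linarith)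
    linarith

end Bound

theorem rpow_scaling_mul_bound {q : ℝ} (hq : 0 < q) (α β γ : ℝ) :
    q ^ (-α / 3) * (2 * q ^ (2 + γ + (α + β) / 4)) =
      2 * q ^ (2 + γ) * q ^ (-α / 12 + β / 4) := by
  rw [mul_left_comm, mul_assoc, ← Real.rpow_add hq, ← Real.rpow_add hq]
  ring_nf

theorem stmt_7_general {F : Type*} [Field F] [MeasurableSpace F] {μ : Measure F} {v : F → ℤ}
    (h : IsIntValuation v) {q : ℝ} (hq : 1 ≤ q) (h2 : (2 : F) ≠ 0) (hv2 : v 2 = 0)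
    (h3 : (3 : F) ≠ 0) (hμ : ∀ n : ℤ, 0 ≤ n → μ (h.ball n) = ENNReal.ofReal (q ^ (-n)))
    (hμ_inv : ∀ (a : F) (s : Set F), μ ((a + ·) ⁻¹' s) = μ s) {ψ : AddChar F ℂ}
    (hψ : HasTrivialConductor h ψ) {a b : F} (ha0 : a ≠ 0) (hb0 : b ≠ 0) (hab : v a ≤ v b)
    (hba : 3 * v b < v a) :
    ‖((q ^ (-(v a : ℝ) / 3) : ℝ) : ℂ) * ∫ t in (h.integers : Set F), ψ (a * t ^ 3 + b * t) ∂μ‖ ≤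
      2 * q ^ (2 + (v 3 : ℝ)) * q ^ (-(v a : ℝ) / 12 + (v b : ℝ) / 4) := by
  have hq0 : 0 < q := by linarith
  rw [← rpow_scaling_mul_bound hq0, norm_mul, Complex.norm_real,
    Real.norm_of_nonneg (Real.rpow_nonneg hq0.le _)]
  refine mul_le_mul_of_nonneg_left ?_ (Real.rpow_nonneg hq0.le _)
  by_cases hg : AEStronglyMeasurable (cubicPhase ψ a b) (μ.restrict (h.integers : Set F))
  swap
  · have hzero : ∫ t in (h.integers : Set F), ψ (a * t ^ 3 + b * t) ∂μ = 0 :=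
      integral_undef fun hi => hg hi.aestronglyMeasurable
    rw [hzero, norm_zero]
    positivity
  let m := OuterMeasure.comap ((↑) : h.integers → F) μ.toOuterMeasure
  let _ : MeasurableSpace h.integers := m.caratheodory
  have hinv (y : h.integers) (s : Set h.integers) : m ((y + ·) ⁻¹' s) = m s :=
    comap_coe_preimage_add hμ_inv y s
  have := measurableAdd_of_eq_caratheodory rfl hinv
  have := isAddLeftInvariant_toMeasure rfl hinv
  have hrange : (h.integers : Set F) = Set.range ((↑) : h.integers → F) := Subtype.range_coe.symm
  rw [hrange] at hg ⊢
  refine (congrArg norm (setIntegral_range_eq_integral_comp rfl hg)).trans_le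
    (norm_integral_cubicPhase_le hq (fun n => ?_) hψ h2 hv2 h3 ha0 hb0 hab hba
      (measurable_comp_of_aestronglyMeasurable_restrict_range rfl hg))
  rw [toMeasure_comap_apply rfl, h.image_coe_intBall, hμ _ (le_max_right n 0)]

/-- Part (2) of the Proposition on the p-adic Airy function
`Ai(a;b) := q^{-v(a)/3} ∫_{t ∈ O} ψ(a t³ + b t) dt` (with `v(a) < 0`): if
`v(a) ≤ v(b) < (1/3) v(a)`, then `|Ai(a;b)| ≤ 2 q^{2 + v(3)} q^{-v(a)/12 + v(b)/4}`. -/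
theorem stmt_7 {F : Type*} [Field F] [CharZero F] [MeasurableSpace F]
    (μ : Measure F) (v : F → ℤ) (q : ℝ) (ψ : F → ℂ)
    (hq : 1 < q)
    (hv_mul : ∀ x y : F, x ≠ 0 → y ≠ 0 → v (x * y) = v x + v y)
    (hv_add : ∀ x y : F, x ≠ 0 → y ≠ 0 → x + y ≠ 0 → min (v x) (v y) ≤ v (x + y))
    (hodd : v 2 = 0)
    (hμ : ∀ n : ℤ, μ {x : F | x = 0 ∨ n ≤ v x} = ENNReal.ofReal (q ^ (-n)))
    (hμ_inv : ∀ (a : F) (s : Set F), μ ((a + ·) ⁻¹' s) = μ s)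
    (hψ_add : ∀ x y : F, ψ (x + y) = ψ x * ψ y)
    (hψ_triv : ∀ x : F, (x = 0 ∨ 0 ≤ v x) → ψ x = 1)
    (hψ_nontriv : ∃ x : F, x ≠ 0 ∧ v x = -1 ∧ ψ x ≠ 1)
    (a b : F) (ha0 : a ≠ 0) (hb0 : b ≠ 0) (ha : v a < 0)
    (hab : v a ≤ v b) (hba : 3 * v b < v a) :
    ‖((Real.rpow q (-(v a : ℝ) / 3) : ℝ) : ℂ) *
        ∫ t in {t : F | t = 0 ∨ 0 ≤ v t}, ψ (a * t ^ 3 + b * t) ∂μ‖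
      ≤ 2 * Real.rpow q (2 + (v 3 : ℝ)) *
          Real.rpow q (-(v a : ℝ) / 12 + (v b : ℝ) / 4) :=
  stmt_7_general (F := F) (ψ := ⟨ψ, hψ_triv 0 (Or.inl rfl), hψ_add⟩) ⟨hv_mul, hv_add⟩ hq.le
    two_ne_zero hodd three_ne_zero (fun n _ => hμ n) hμ_inv ⟨hψ_triv, hψ_nontriv⟩ ha0 hb0 hab hba
end
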